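/- Let G be a finite group and K an ordered G-simplicial complex. Then the equivariant topological complexity of the geometric realization |K| equals the equivariant simplicial complexity of K: TC_G(|K|) = SC_G(K). -/

import Mathlib

/-! ### Module A: equivariant TC / CC / LS for topological G-spaces -/

/-- The zigzag order `0 < 1 > 2 < 3 > ⋯` on natural numbers. -/
def zigzagLE (i j : ℕ) : Prop := i = j ∨ (i % 2 = 0 ∧ (j = i + 1 ∨ i = j + 1))

/-- The combinatorial interval `J m = {0, 1, …, m}`. -/
def J (m : ℕ) : Type := Fin (m + 1)

namespace J

/-- The underlying natural number of a point of `J m`. -/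
def val {m : ℕ} (i : J m) : ℕ := Fin.val i

/-- The initial point `0` of the combinatorial interval. -/
def zero (m : ℕ) : J m := (0 : Fin (m + 1))

/-- The final point `m` of the combinatorial interval. -/
def last (m : ℕ) : J m := Fin.last m

/-- The topology on `J m` whose open sets are the down-closed sets for the zigzag order. -/
instance (m : ℕ) : TopologicalSpace (J m) where
  IsOpen U := ∀ ⦃a⦄, a ∈ U → ∀ ⦃b⦄, zigzagLE (J.val b) (J.val a) → b ∈ U
  isOpen_univ := fun a _ b _ => Set.mem_univ b
  isOpen_inter := fun s t hs ht a ha b hba => ⟨hs ha.1 hba, ht ha.2 hba⟩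
  isOpen_sUnion := fun S hS a ha b hba => by
    obtain ⟨t, htS, hat⟩ := ha
    exact ⟨t, htS, hS t htS hat hba⟩

end J

section Equivariant

variable (G : Type*) [Group G]

/-- A set is `G`-invariant if it is stable under the action of every group element. -/
def GInvariant {α : Type*} [SMul G α] (U : Set α) : Prop :=
  ∀ g : G, ∀ x ∈ U, g • x ∈ U

variable (X : Type*) [TopologicalSpace X] [MulAction G X]

/-- `U ⊆ X × X` admits a continuous equivariant section of the free path fibration
`π : X^I → X × X`, `α ↦ (α 0, α 1)`. -/
def EqNavigable (U : Set (X × X)) : Prop :=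
  ∃ s : U → C(unitInterval, X), Continuous s ∧
    (∀ u : U, s u 0 = (u : X × X).1 ∧ s u 1 = (u : X × X).2) ∧
    (∀ (g : G) (u : U) (h : g • (u : X × X) ∈ U) (t : unitInterval),
      s ⟨g • (u : X × X), h⟩ t = g • s u t)

/-- The equivariant topological complexity: the least `k` such that `X × X` admits a cover by
`k` open invariant sets, each admitting a continuous equivariant section of the free path
fibration; `⊤` if there is no such cover. -/
noncomputable def eqTC : ℕ∞ :=
  sInf {k : ℕ∞ | ∃ n : ℕ, k = n ∧ ∃ U : Fin n → Set (X × X),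
    (∀ i, IsOpen (U i)) ∧ (∀ i, GInvariant G (U i)) ∧ (⋃ i, U i) = Set.univ ∧
    ∀ i, EqNavigable G X (U i)}

/-- `U ⊆ X × X` admits a continuous equivariant section of the combinatorial path fibration
`q_m : X^{J_m} → X × X`, `β ↦ (β 0, β m)`. -/
def EqNavigableJ (m : ℕ) (U : Set (X × X)) : Prop :=
  ∃ s : U → C(J m, X), Continuous s ∧
    (∀ u : U, s u (J.zero m) = (u : X × X).1 ∧ s u (J.last m) = (u : X × X).2) ∧
    (∀ (g : G) (u : U) (h : g • (u : X × X) ∈ U) (t : J m),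
      s ⟨g • (u : X × X), h⟩ t = g • s u t)

/-- The equivariant combinatorial complexity with paths of length `m`: the least `k` such that
`X × X` admits a cover by `k` open invariant sets, each admitting a continuous equivariant
section of the combinatorial path fibration `q_m`; `⊤` if there is no such cover. -/
noncomputable def eqCCm (m : ℕ) : ℕ∞ :=
  sInf {k : ℕ∞ | ∃ n : ℕ, k = n ∧ ∃ U : Fin n → Set (X × X),
    (∀ i, IsOpen (U i)) ∧ (∀ i, GInvariant G (U i)) ∧ (⋃ i, U i) = Set.univ ∧
    ∀ i, EqNavigableJ G X m (U i)}

/-- The equivariant combinatorial complexity: the minimum over all `m ≥ 1` of `eqCCm`. -/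
noncomputable def eqCC : ℕ∞ := ⨅ m : ℕ, eqCCm G X (m + 1)

/-- `U ⊆ X` is `G`-categorical for the orbit of `x₀`: the inclusion of `U` into `X` is
`G`-homotopic to a map taking values in the orbit of `x₀`. -/
def GCategoricalAt (U : Set X) (x₀ : X) : Prop :=
  ∃ F : U × unitInterval → X, Continuous F ∧
    (∀ u : U, F (u, 0) = (u : X)) ∧
    (∀ (g : G) (u : U) (h : g • (u : X) ∈ U) (t : unitInterval),
      F (⟨g • (u : X), h⟩, t) = g • F (u, t)) ∧
    (∀ u : U, F (u, 1) ∈ MulAction.orbit G x₀)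

/-- `U ⊆ X` is `G`-categorical: the inclusion of `U` into `X` is `G`-homotopic to a map taking
values in a single orbit. -/
def GCategorical (U : Set X) : Prop :=
  ∃ x₀ : X, GCategoricalAt G X U x₀

/-- The equivariant Lusternik–Schnirelmann category: the least `k` such that `X` is covered by
`k` open invariant `G`-categorical sets; `⊤` if there is no such cover. -/
noncomputable def eqLS : ℕ∞ :=
  sInf {k : ℕ∞ | ∃ n : ℕ, k = n ∧ ∃ U : Fin n → Set X,
    (∀ i, IsOpen (U i)) ∧ (∀ i, GInvariant G (U i)) ∧ (⋃ i, U i) = Set.univ ∧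
    ∀ i, GCategorical G X (U i)}

end Equivariant
/-! ### Module C: ordered G-simplicial complexes and their geometric realizations -/

/-- An ordered `G`-simplicial complex: a finite abstract simplicial complex whose vertex set
carries a partial order in which every simplex is totally ordered, together with an action of
`G` on the vertices by monotone simplicial maps. -/
structure GOSC (G : Type) [Group G] : Type 1 where
  /-- the vertex set -/
  V : Type
  [fin : Fintype V]
  [dec : DecidableEq V]
  [po : PartialOrder V]
  /-- the set of simplices -/
  faces : Set (Finset V)
  singleton_mem : ∀ v : V, {v} ∈ faces
  nonempty_of_mem : ∀ s ∈ faces, s.Nonempty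
  down_closed : ∀ s ∈ faces, ∀ t ⊆ s, t.Nonempty → t ∈ faces
  face_chain : ∀ s ∈ faces, ∀ x ∈ s, ∀ y ∈ s, x ≤ y ∨ y ≤ x
  /-- the action of `G` on vertices -/
  smul : G → V → V
  smul_one : ∀ v, smul 1 v = v
  smul_mul : ∀ g h v, smul (g * h) v = smul g (smul h v)
  smul_mono : ∀ g : G, ∀ x y : V, x ≤ y → smul g x ≤ smul g y
  smul_faces : ∀ g : G, ∀ s ∈ faces, s.image (smul g) ∈ faces

attribute [instance] GOSC.fin GOSC.dec GOSC.po

namespace GOSC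

variable {G : Type} [Group G]

/-- The underlying set of the geometric realization `|K|`: formal convex combinations of
vertices whose support is a simplex of `K`. -/
def realSet (K : GOSC G) : Set (K.V → ℝ) :=
  {f | (∀ v, 0 ≤ f v) ∧ (∑ v, f v) = 1 ∧ ∃ s ∈ K.faces, ∀ v, f v ≠ 0 → v ∈ s}

/-- The geometric realization `|K|` of an ordered `G`-simplicial complex, topologized as a
subspace of Euclidean space `K.V → ℝ`. -/
def Real (K : GOSC G) : Type := {f : K.V → ℝ // f ∈ K.realSet}

instance (K : GOSC G) : TopologicalSpace K.Real :=
  inferInstanceAs (TopologicalSpace {f : K.V → ℝ // f ∈ K.realSet})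

/-- Each `g : G` acts on `K.V` by an order isomorphism. -/
def permOf (K : GOSC G) (g : G) : Equiv K.V K.V where
  toFun := K.smul g
  invFun := K.smul g⁻¹
  left_inv := fun v => by
    rw [← K.smul_mul, inv_mul_cancel, K.smul_one]
  right_inv := fun v => by
    rw [← K.smul_mul, mul_inv_cancel, K.smul_one]

/-- The action of `G` on the geometric realization, by affine extension:
`(g • f) v = f (g⁻¹ • v)`. -/
instance (K : GOSC G) : SMul G K.Real where
  smul g f := ⟨fun v => f.val (K.smul g⁻¹ v), by
    obtain ⟨hnn, hsum, s, hs, hsupp⟩ := f.prop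
    refine ⟨fun v => hnn _, ?_, s.image (K.smul g), K.smul_faces g s hs, ?_⟩
    · rw [show (∑ v, f.val (K.smul g⁻¹ v)) = ∑ v, f.val (K.permOf g⁻¹ v) from rfl,
        Equiv.sum_comp (K.permOf g⁻¹) f.val]
      exact hsum
    · intro v hv
      have : K.smul g⁻¹ v ∈ s := hsupp _ hv
      refine Finset.mem_image.mpr ⟨K.smul g⁻¹ v, this, ?_⟩
      rw [← K.smul_mul, mul_inv_cancel, K.smul_one]⟩

lemma smul_apply (K : GOSC G) (g : G) (f : K.Real) (v : K.V) :
    (g • f).val v = f.val (K.smul g⁻¹ v) := rfl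

instance (K : GOSC G) : MulAction G K.Real where
  one_smul f := by
    apply Subtype.ext
    funext v
    rw [smul_apply, inv_one, K.smul_one]
  mul_smul g h f := by
    apply Subtype.ext
    funext v
    rw [smul_apply, smul_apply, smul_apply, mul_inv_rev, K.smul_mul]

end GOSC
namespace GOSC

variable {G : Type} [Group G]

/-- The product of two ordered `G`-simplicial complexes: vertices are pairs with the product
order, simplices are the nonempty chains both of whose projections are simplices, and `G`
acts diagonally. -/
noncomputable def prod (K L : GOSC G) : GOSC G :=
  letI : DecidableEq (K.V × L.V) := Classical.decEq _
  { V := K.V × L.V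
    faces := {s | s.Nonempty ∧ (∀ x ∈ s, ∀ y ∈ s, x ≤ y ∨ y ≤ x) ∧
      s.image Prod.fst ∈ K.faces ∧ s.image Prod.snd ∈ L.faces}
    singleton_mem := fun v => ⟨Finset.singleton_nonempty v, by
        intro x hx y hy
        rw [Finset.mem_singleton] at hx hy
        subst hx; subst hy; exact Or.inl le_rfl,
      by rw [Finset.image_singleton]; exact K.singleton_mem v.1,
      by rw [Finset.image_singleton]; exact L.singleton_mem v.2⟩
    nonempty_of_mem := fun s hs => hs.1
    down_closed := fun s hs t hts htne =>
      ⟨htne, fun x hx y hy => hs.2.1 x (hts hx) y (hts hy),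
        K.down_closed _ hs.2.2.1 _ (Finset.image_subset_image hts) (htne.image _),
        L.down_closed _ hs.2.2.2 _ (Finset.image_subset_image hts) (htne.image _)⟩
    face_chain := fun s hs => hs.2.1
    smul := fun g p => (K.smul g p.1, L.smul g p.2)
    smul_one := fun p => by show (K.smul 1 p.1, L.smul 1 p.2) = p; rw [K.smul_one, L.smul_one]
    smul_mul := fun g h p => by
      show (K.smul (g * h) p.1, L.smul (g * h) p.2) = _
      rw [K.smul_mul, L.smul_mul]
    smul_mono := fun g x y hxy => ⟨K.smul_mono g _ _ hxy.1, L.smul_mono g _ _ hxy.2⟩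
    smul_faces := fun g s hs => by
      refine ⟨hs.1.image _, ?_, ?_, ?_⟩
      · intro x hx y hy
        rcases Finset.mem_image.mp hx with ⟨a, ha, rfl⟩
        rcases Finset.mem_image.mp hy with ⟨b, hb, rfl⟩
        rcases hs.2.1 a ha b hb with h | h
        · exact Or.inl ⟨K.smul_mono g _ _ h.1, L.smul_mono g _ _ h.2⟩
        · exact Or.inr ⟨K.smul_mono g _ _ h.1, L.smul_mono g _ _ h.2⟩
      · rw [Finset.image_image,
          show (Prod.fst ∘ fun p : K.V × L.V => (K.smul g p.1, L.smul g p.2)) =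
            K.smul g ∘ Prod.fst from rfl, ← Finset.image_image]
        exact K.smul_faces g _ hs.2.2.1
      · rw [Finset.image_image,
          show (Prod.snd ∘ fun p : K.V × L.V => (K.smul g p.1, L.smul g p.2)) =
            L.smul g ∘ Prod.snd from rfl, ← Finset.image_image]
        exact L.smul_faces g _ hs.2.2.2 }

/-- The barycentric subdivision of an ordered `G`-simplicial complex: vertices are the
simplices of `K` ordered by inclusion, simplices are the nonempty chains of simplices,
with the induced `G`-action. -/
noncomputable def sd (K : GOSC G) : GOSC G :=
  letI : DecidablePred (· ∈ K.faces) := Classical.decPred _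
  letI : DecidableEq {s : Finset K.V // s ∈ K.faces} := Classical.decEq _
  letI : Fintype {s : Finset K.V // s ∈ K.faces} := Subtype.fintype _
  { V := {s : Finset K.V // s ∈ K.faces}
    faces := {σ | σ.Nonempty ∧ ∀ a ∈ σ, ∀ b ∈ σ, a ≤ b ∨ b ≤ a}
    singleton_mem := fun v => ⟨Finset.singleton_nonempty v, by
      intro a ha b hb
      rw [Finset.mem_singleton] at ha hb
      subst ha; subst hb; exact Or.inl le_rfl⟩
    nonempty_of_mem := fun σ hσ => hσ.1
    down_closed := fun σ hσ τ hτσ hτne => ⟨hτne, fun a ha b hb => hσ.2 a (hτσ ha) b (hτσ hb)⟩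
    face_chain := fun σ hσ => hσ.2
    smul := fun g s => ⟨s.val.image (K.smul g), K.smul_faces g s.val s.prop⟩
    smul_one := fun s => by
      apply Subtype.ext
      show s.val.image (K.smul 1) = s.val
      rw [Finset.image_congr (g := id) (fun x _ => K.smul_one x), Finset.image_id]
    smul_mul := fun g h s => by
      apply Subtype.ext
      show s.val.image (K.smul (g * h)) = (s.val.image (K.smul h)).image (K.smul g)
      rw [Finset.image_image]
      exact Finset.image_congr (fun x _ => K.smul_mul g h x)
    smul_mono := fun g s t hst => by
      show s.val.image (K.smul g) ≤ t.val.image (K.smul g)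
      exact Finset.image_subset_image hst
    smul_faces := fun g σ hσ => by
      refine ⟨hσ.1.image _, ?_⟩
      intro a ha b hb
      rcases Finset.mem_image.mp ha with ⟨a', ha', rfl⟩
      rcases Finset.mem_image.mp hb with ⟨b', hb', rfl⟩
      rcases hσ.2 a' ha' b' hb' with h | h
      · exact Or.inl (Finset.image_subset_image h)
      · exact Or.inr (Finset.image_subset_image h) }

/-- Iterated barycentric subdivision of an ordered `G`-simplicial complex. -/
noncomputable def sdIter : ℕ → GOSC G → GOSC G
  | 0, K => K
  | (n + 1), K => (sdIter n K).sd

/-- Every simplex of an ordered simplicial complex has a greatest vertex. -/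
lemma exists_greatest (K : GOSC G) (s : Finset K.V) (hs : s ∈ K.faces) :
    ∃ m ∈ s, ∀ x ∈ s, x ≤ m := by
  obtain ⟨m, hm, hmax⟩ := Finset.exists_maximal (K.nonempty_of_mem s hs)
  refine ⟨m, hm, fun x hx => ?_⟩
  rcases K.face_chain s hs x hx m hm with h | h
  · exact h
  · rcases eq_or_lt_of_le h with e | lt
    · exact le_of_eq e.symm
    · exact hmax hx h

/-- The last-vertex map `τ : sd(K) → K`, the chosen equivariant simplicial approximation of
the identity: it sends a simplex of `K` (a vertex of `sd(K)`) to its greatest vertex. -/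
noncomputable def tau (K : GOSC G) : (sd K).V → K.V := fun s =>
  Classical.choose (K.exists_greatest s.val s.prop)

/-- The iterated last-vertex map `sd^n(M) → M`, the chosen equivariant simplicial
approximation of the identity. -/
noncomputable def tauIter : (n : ℕ) → (M : GOSC G) → (sdIter n M).V → M.V
  | 0, _ => id
  | (n + 1), M => (tauIter n M) ∘ (tau (sdIter n M))

/-- The two vertex maps `π₁, π₂ : M → K` are equivariantly `c`-contiguous on the invariant
subcomplex determined by the down-closed set of simplices `Λ`: there is a chain of `c + 1`
equivariant simplicial maps from `π₁` to `π₂` in which consecutive maps are contiguous. -/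
def ContigOn (M K : GOSC G) (π₁ π₂ : M.V → K.V) (Λ : Set (Finset M.V)) (c : ℕ) : Prop :=
  ∃ φ : Fin (c + 1) → M.V → K.V,
    (∀ s ∈ Λ, ∀ v ∈ s, φ 0 v = π₁ v) ∧
    (∀ s ∈ Λ, ∀ v ∈ s, φ (Fin.last c) v = π₂ v) ∧
    (∀ j, ∀ s ∈ Λ, s.image (φ j) ∈ K.faces) ∧
    (∀ j, ∀ g : G, ∀ s ∈ Λ, ∀ v ∈ s, φ j (M.smul g v) = K.smul g (φ j v)) ∧
    (∀ j : Fin c, ∀ s ∈ Λ, (s.image (φ j.castSucc) ∪ s.image (φ j.succ)) ∈ K.faces)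

/-- `SC_G^{b,c}(K)`: the least `n` such that `sd^b(K × K)` can be covered by `n` invariant
subcomplexes, on each of which the two composites of the iterated (last-vertex) equivariant
approximations of the identity `sd^b(K×K) → K×K` with the two projections `K×K → K` are
equivariantly `c`-contiguous; `⊤` if there is no such cover. -/
noncomputable def SCbc (K : GOSC G) (b c : ℕ) : ℕ∞ :=
  sInf {k : ℕ∞ | ∃ n : ℕ, k = n ∧
    ∃ Λ : Fin n → Set (Finset (sdIter b (K.prod K)).V),
      (∀ i, Λ i ⊆ (sdIter b (K.prod K)).faces) ∧
      (∀ i, ∀ s ∈ Λ i, ∀ t ⊆ s, t.Nonempty → t ∈ Λ i) ∧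
      (∀ i, ∀ g : G, ∀ s ∈ Λ i, s.image ((sdIter b (K.prod K)).smul g) ∈ Λ i) ∧
      ((sdIter b (K.prod K)).faces ⊆ ⋃ i, Λ i) ∧
      ∀ i, ContigOn (sdIter b (K.prod K)) K
        (fun v => (tauIter b (K.prod K) v).1)
        (fun v => (tauIter b (K.prod K) v).2)
        (Λ i) c}

/-- The equivariant simplicial complexity `SC_G(K) = min_{b,c} SC_G^{b,c}(K)`. -/
noncomputable def SCG (K : GOSC G) : ℕ∞ :=
  ⨅ b : ℕ, ⨅ c : ℕ, SCbc K b c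

end GOSC

namespace GOSC

variable {G : Type} [Group G]

/-! ### Basic facts -/

lemma smul_inv_smul' (K : GOSC G) (g : G) (v : K.V) : K.smul g (K.smul g⁻¹ v) = v := by
  rw [← K.smul_mul, mul_inv_cancel, K.smul_one]

lemma inv_smul_smul' (K : GOSC G) (g : G) (v : K.V) : K.smul g⁻¹ (K.smul g v) = v := by
  rw [← K.smul_mul, inv_mul_cancel, K.smul_one]

lemma smul_inj (K : GOSC G) (g : G) : Function.Injective (K.smul g) := (K.permOf g).injective

lemma smul_le_iff (K : GOSC G) (g : G) (v w : K.V) : K.smul g v ≤ K.smul g w ↔ v ≤ w := by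
  constructor
  · intro h
    have := K.smul_mono g⁻¹ _ _ h
    rwa [inv_smul_smul', inv_smul_smul'] at this
  · exact K.smul_mono g v w

lemma smul_lt_iff (K : GOSC G) (g : G) (v w : K.V) : K.smul g v < K.smul g w ↔ v < w := by
  rw [lt_iff_le_not_ge, lt_iff_le_not_ge, smul_le_iff, smul_le_iff]

lemma sum_smul (K : GOSC G) (g : G) (f : K.V → ℝ) : ∑ v, f (K.smul g v) = ∑ v, f v :=
  Equiv.sum_comp (K.permOf g) f

lemma tau_mem (K : GOSC G) (s : (sd K).V) : K.tau s ∈ s.val :=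
  (Classical.choose_spec (K.exists_greatest s.val s.prop)).1

lemma le_tau (K : GOSC G) (s : (sd K).V) (x : K.V) (hx : x ∈ s.val) : x ≤ K.tau s :=
  (Classical.choose_spec (K.exists_greatest s.val s.prop)).2 x hx

lemma tau_smul (K : GOSC G) (g : G) (s : (sd K).V) :
    K.tau ((sd K).smul g s) = K.smul g (K.tau s) := by
  apply le_antisymm
  · have h := K.tau_mem ((sd K).smul g s)
    obtain ⟨u, hu, hu'⟩ := Finset.mem_image.mp h
    rw [← hu']
    exact K.smul_mono g _ _ (K.le_tau s u hu)
  · exact K.le_tau _ _ (Finset.mem_image_of_mem _ (K.tau_mem s))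

lemma tauIter_smul (M : GOSC G) (n : ℕ) (g : G) (v : (sdIter n M).V) :
    tauIter n M ((sdIter n M).smul g v) = M.smul g (tauIter n M v) := by
  induction n with
  | zero => rfl
  | succ n ih =>
    show tauIter n M (tau (sdIter n M) ((sd (sdIter n M)).smul g v)) = _
    exact (congrArg (tauIter n M) (tau_smul (sdIter n M) g v)).trans (ih _)

/-- The normalization of a nonnegative nonzero weight supported on a face. -/
noncomputable def normReal (L : GOSC G) (w : L.V → ℝ) (h0 : ∀ v, 0 ≤ w v) (hpos : 0 < ∑ v, w v)
    (hs : ∃ s ∈ L.faces, ∀ v, w v ≠ 0 → v ∈ s) : L.Real :=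
  ⟨fun v => w v / ∑ v, w v, fun v => div_nonneg (h0 v) hpos.le, by
    rw [← Finset.sum_div, div_self hpos.ne'], by
    obtain ⟨s, hs, h⟩ := hs
    refine ⟨s, hs, fun v hv => h v ?_⟩
    rintro h
    apply hv
    show w v / _ = 0
    rw [h, zero_div]⟩

lemma normReal_ne_zero (L : GOSC G) (w : L.V → ℝ) (h0 : ∀ v, 0 ≤ w v) (hpos : 0 < ∑ v, w v)
    (hs : ∃ s ∈ L.faces, ∀ v, w v ≠ 0 → v ∈ s) (v : L.V)
    (h : (normReal L w h0 hpos hs).val v ≠ 0) : w v ≠ 0 := by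
  rintro h'
  apply h
  show w v / _ = 0
  rw [h', zero_div]

lemma continuous_normReal (L : GOSC G) {X : Type*} [TopologicalSpace X] (w : X → L.V → ℝ)
    (h0 : ∀ x v, 0 ≤ w x v) (hpos : ∀ x, 0 < ∑ v, w x v)
    (hs : ∀ x, ∃ s ∈ L.faces, ∀ v, w x v ≠ 0 → v ∈ s) (hc : ∀ v, Continuous fun x => w x v) :
    Continuous fun x => normReal L (w x) (h0 x) (hpos x) (hs x) := by
  refine Continuous.subtype_mk (continuous_pi fun v => ?_) _
  exact (hc v).div (continuous_finsetSum _ fun v _ => hc v) fun x => (hpos x).ne'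

lemma normReal_smul (L : GOSC G) (g : G) (w w' : L.V → ℝ) (h0 h0' hpos hpos' hs hs')
    (h : ∀ v, w' (L.smul g v) = w v) :
    normReal L w' h0' hpos' hs' = g • normReal L w h0 hpos hs := by
  apply Subtype.ext
  funext v
  rw [smul_apply]
  show w' v / _ = w _ / _
  rw [← h, smul_inv_smul', ← sum_smul L g w', Finset.sum_congr rfl fun v _ => h v]

lemma Real.continuous_apply (L : GOSC G) (v : L.V) : Continuous fun x : L.Real => x.val v :=
  (_root_.continuous_apply v).comp continuous_subtype_val

lemma Real.exists_pos (L : GOSC G) (x : L.Real) : ∃ v, 0 < x.val v := by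
  by_contra! h
  have := Finset.sum_nonpos (s := Finset.univ) fun v _ => h v
  rw [x.prop.2.1] at this
  linarith

lemma Real.pos_of_ne (L : GOSC G) (x : L.Real) (v : L.V) (h : x.val v ≠ 0) : 0 < x.val v :=
  lt_of_le_of_ne (x.prop.1 v) h.symm

/-- The support of a point of the realization. -/
noncomputable def Real.supp (L : GOSC G) (x : L.Real) : Finset L.V :=
  Finset.univ.filter fun v => x.val v ≠ 0

lemma Real.mem_supp (L : GOSC G) (x : L.Real) (v : L.V) : v ∈ Real.supp L x ↔ x.val v ≠ 0 := by
  simp [Real.supp]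

lemma Real.supp_mem (L : GOSC G) (x : L.Real) : Real.supp L x ∈ L.faces := by
  obtain ⟨s, hs, h⟩ := x.prop.2.2
  refine L.down_closed s hs _ (fun v hv => h v ((Real.mem_supp L x v).1 hv)) ?_
  obtain ⟨v, hv⟩ := Real.exists_pos L x
  exact ⟨v, (Real.mem_supp L x v).2 hv.ne'⟩

/-! ### The map `|L| → |sd L|` -/

open Classical in
noncomputable def sdW (L : GOSC G) (x : L.V → ℝ) (σ : (sd L).V) : ℝ :=
  (∏ v, if v ∈ σ.val then x v else 1) *
    ∏ v, ∏ w, if v ∈ σ.val ∧ w ∉ σ.val then max (x v - x w) 0 else 1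

lemma sdW_nonneg (L : GOSC G) (x : L.Real) (σ : (sd L).V) : 0 ≤ sdW L x.val σ := by
  unfold sdW
  refine mul_nonneg (Finset.prod_nonneg fun v _ => ?_)
    (Finset.prod_nonneg fun v _ => Finset.prod_nonneg fun w _ => ?_)
  · split_ifs
    · exact x.prop.1 v
    · exact zero_le_one
  · split_ifs
    · exact le_max_right _ _
    · exact zero_le_one

lemma sdW_ne_zero (L : GOSC G) (x : L.Real) (σ : (sd L).V) (h : sdW L x.val σ ≠ 0) :
    (∀ v ∈ σ.val, x.val v ≠ 0) ∧ ∀ v ∈ σ.val, ∀ w ∉ σ.val, x.val w < x.val v := by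
  unfold sdW at h
  rw [mul_ne_zero_iff, Finset.prod_ne_zero_iff, Finset.prod_ne_zero_iff] at h
  refine ⟨fun v hv => ?_, fun v hv w hw => ?_⟩
  · have := h.1 v (Finset.mem_univ v)
    rwa [if_pos hv] at this
  · have := Finset.prod_ne_zero_iff.1 (h.2 v (Finset.mem_univ v)) w (Finset.mem_univ w)
    rw [if_pos ⟨hv, hw⟩] at this
    by_contra! h'
    exact this (max_eq_right (by linarith))

lemma sdW_supp (L : GOSC G) (x : L.Real) :
    0 < sdW L x.val ⟨Real.supp L x, Real.supp_mem L x⟩ := by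
  unfold sdW
  refine mul_pos (Finset.prod_pos fun v _ => ?_)
    (Finset.prod_pos fun v _ => Finset.prod_pos fun w _ => ?_)
  · split_ifs with h
    · exact Real.pos_of_ne L x v ((Real.mem_supp L x v).1 h)
    · exact zero_lt_one
  · split_ifs with h
    · have h1 := Real.pos_of_ne L x v ((Real.mem_supp L x v).1 h.1)
      have h2 : x.val w = 0 := by
        by_contra h'
        exact h.2 ((Real.mem_supp L x w).2 h')
      rw [h2, sub_zero]
      exact lt_max_of_lt_left h1
    · exact zero_lt_one

lemma sdW_smul (L : GOSC G) (g : G) (x : L.Real) (σ : (sd L).V) :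
    sdW L (g • x).val ((sd L).smul g σ) = sdW L x.val σ := by
  have hm : ∀ v, L.smul g v ∈ ((sd L).smul g σ).val ↔ v ∈ σ.val := by
    intro v
    show L.smul g v ∈ σ.val.image (L.smul g) ↔ _
    exact (L.smul_inj g).mem_finset_image
  unfold sdW
  congr 1
  · rw [← Equiv.prod_comp (L.permOf g)]
    refine Finset.prod_congr rfl fun v _ => ?_
    show (if L.smul g v ∈ _ then x.val (L.smul g⁻¹ (L.smul g v)) else 1) = _
    simp only [hm, inv_smul_smul']
  · rw [← Equiv.prod_comp (L.permOf g)]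
    refine Finset.prod_congr rfl fun v _ => ?_
    rw [← Equiv.prod_comp (L.permOf g)]
    refine Finset.prod_congr rfl fun w _ => ?_
    show (if L.smul g v ∈ _ ∧ L.smul g w ∉ _ then
      max (x.val (L.smul g⁻¹ (L.smul g v)) - x.val (L.smul g⁻¹ (L.smul g w))) 0 else 1) = _
    simp only [hm, inv_smul_smul']

lemma exists_toSd (L : GOSC G) : ∃ q : L.Real → (sd L).Real, Continuous q ∧
    (∀ (g : G) x, q (g • x) = g • q x) ∧
    ∀ x σ, (q x).val σ ≠ 0 → ∀ v ∈ σ.val, x.val v ≠ 0 := by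
  have hpos : ∀ x : L.Real, 0 < ∑ σ, sdW L x.val σ := fun x =>
    Finset.sum_pos' (fun σ _ => sdW_nonneg L x σ) ⟨_, Finset.mem_univ _, sdW_supp L x⟩
  have hs : ∀ x : L.Real, ∃ s ∈ (sd L).faces, ∀ σ, sdW L x.val σ ≠ 0 → σ ∈ s := by
    classical
    intro x
    refine ⟨Finset.univ.filter fun σ => sdW L x.val σ ≠ 0, ⟨?_, ?_⟩, fun σ hσ => by simpa using hσ⟩
    · exact ⟨⟨Real.supp L x, Real.supp_mem L x⟩, Finset.mem_filter.2 ⟨Finset.mem_univ _, (sdW_supp L x).ne'⟩⟩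
    · intro a ha b hb
      have ha := (sdW_ne_zero L x a (Finset.mem_filter.1 ha).2).2
      have hb := (sdW_ne_zero L x b (Finset.mem_filter.1 hb).2).2
      by_contra! h
      obtain ⟨v, hv, hv'⟩ := Finset.not_subset.1 h.1
      obtain ⟨w, hw, hw'⟩ := Finset.not_subset.1 h.2
      exact lt_asymm (ha v hv w hw') (hb w hw v hv')
  refine ⟨fun x => normReal (sd L) (sdW L x.val) (sdW_nonneg L x) (hpos x) (hs x), ?_, ?_, ?_⟩
  · refine continuous_normReal _ _ _ _ _ fun σ => ?_
    unfold sdW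
    refine Continuous.mul (continuous_finsetProd _ fun v _ => ?_)
      (continuous_finsetProd _ fun v _ => continuous_finsetProd _ fun w _ => ?_)
    · split_ifs
      · exact Real.continuous_apply L v
      · exact continuous_const
    · split_ifs
      · exact ((Real.continuous_apply L v).sub (Real.continuous_apply L w)).max continuous_const
      · exact continuous_const
  · intro g x
    exact normReal_smul _ g _ _ _ _ _ _ _ _ fun σ => sdW_smul L g x σ
  · intro x σ h
    exact (sdW_ne_zero L x σ (normReal_ne_zero _ _ _ _ _ _ h)).1

/-! ### The map `|K| × |K| → |K × K|` -/

open Classical in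
noncomputable def cumLE (K : GOSC G) (f : K.V → ℝ) (v : K.V) : ℝ :=
  ∑ u, if u ≤ v then f u else 0

open Classical in
noncomputable def cumLT (K : GOSC G) (f : K.V → ℝ) (v : K.V) : ℝ :=
  ∑ u, if u < v then f u else 0

lemma cumLE_smul (K : GOSC G) (g : G) (x : K.Real) (v : K.V) :
    cumLE K (g • x).val (K.smul g v) = cumLE K x.val v := by
  unfold cumLE
  rw [← sum_smul K g]
  refine Finset.sum_congr rfl fun u _ => ?_
  rw [smul_apply, inv_smul_smul']
  classical exact if_congr (smul_le_iff K g u v) rfl rfl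

lemma cumLT_smul (K : GOSC G) (g : G) (x : K.Real) (v : K.V) :
    cumLT K (g • x).val (K.smul g v) = cumLT K x.val v := by
  unfold cumLT
  rw [← sum_smul K g]
  refine Finset.sum_congr rfl fun u _ => ?_
  rw [smul_apply, inv_smul_smul']
  classical exact if_congr (smul_lt_iff K g u v) rfl rfl

lemma cumLE_eq (K : GOSC G) (f : K.V → ℝ) (v : K.V) : cumLE K f v = cumLT K f v + f v := by
  classical
  unfold cumLE cumLT
  have : f v = ∑ u, if u = v then f u else 0 := by simp
  conv_rhs => rw [this]
  rw [← Finset.sum_add_distrib]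
  refine Finset.sum_congr rfl fun u _ => ?_
  by_cases h : u = v
  · subst h; simp
  · by_cases h' : u < v
    · simp [h, h', h'.le]
    · have : ¬ u ≤ v := fun hh => h' (lt_of_le_of_ne hh h)
      simp [h, h', this]

lemma cumLE_le_cumLT (K : GOSC G) (x : K.Real) (v w : K.V) (h : v < w) :
    cumLE K x.val v ≤ cumLT K x.val w := by
  unfold cumLE cumLT
  refine Finset.sum_le_sum fun u _ => ?_
  by_cases h' : u ≤ v
  · rw [if_pos h', if_pos (lt_of_le_of_lt h' h)]
  · rw [if_neg h']
    split_ifs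
    · exact x.prop.1 u
    · exact le_rfl

lemma exists_cumLE_one (K : GOSC G) (x : K.Real) : ∃ v, cumLE K x.val v = 1 ∧ x.val v ≠ 0 := by
  obtain ⟨m, hm, h⟩ := K.exists_greatest _ (Real.supp_mem K x)
  refine ⟨m, ?_, (Real.mem_supp K x m).1 hm⟩
  rw [← x.prop.2.1]
  refine Finset.sum_congr rfl fun u _ => ?_
  split_ifs with hu
  · rfl
  · by_contra h'
    exact hu (h u ((Real.mem_supp K x u).2 (Ne.symm h')))

lemma continuous_cumLE (K : GOSC G) (v : K.V) : Continuous fun x : K.Real => cumLE K x.val v := by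
  refine continuous_finsetSum _ fun u _ => ?_
  split_ifs
  · exact Real.continuous_apply K u
  · exact continuous_const

lemma continuous_cumLT (K : GOSC G) (v : K.V) : Continuous fun x : K.Real => cumLT K x.val v := by
  refine continuous_finsetSum _ fun u _ => ?_
  split_ifs
  · exact Real.continuous_apply K u
  · exact continuous_const

noncomputable def prodW (K : GOSC G) (x : K.Real × K.Real) (p : (K.prod K).V) : ℝ :=
  max (min (cumLE K x.1.val p.1) (cumLE K x.2.val p.2) -
    max (cumLT K x.1.val p.1) (cumLT K x.2.val p.2)) 0

lemma prodW_ne_zero (K : GOSC G) (x : K.Real × K.Real) (p : (K.prod K).V) (h : prodW K x p ≠ 0) :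
    cumLT K x.1.val p.1 < cumLE K x.1.val p.1 ∧ cumLT K x.1.val p.1 < cumLE K x.2.val p.2 ∧
    cumLT K x.2.val p.2 < cumLE K x.1.val p.1 ∧ cumLT K x.2.val p.2 < cumLE K x.2.val p.2 := by
  have h' : 0 < min (cumLE K x.1.val p.1) (cumLE K x.2.val p.2) -
    max (cumLT K x.1.val p.1) (cumLT K x.2.val p.2) := by
    by_contra! hh
    exact h (max_eq_right hh)
  rw [sub_pos, lt_min_iff, max_lt_iff, max_lt_iff] at h'
  exact ⟨h'.1.1, h'.2.1, h'.1.2, h'.2.2⟩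

lemma exists_toProd (K : GOSC G) : ∃ q : K.Real × K.Real → (K.prod K).Real, Continuous q ∧
    (∀ (g : G) x, q (g • x) = g • q x) ∧
    ∀ x p, (q x).val p ≠ 0 → x.1.val p.1 ≠ 0 ∧ x.2.val p.2 ≠ 0 := by
  have h0 : ∀ x p, 0 ≤ prodW K x p := fun x p => le_max_right _ _
  have hne : ∀ x : K.Real × K.Real, ∃ p, 0 < prodW K x p := by
    intro x
    obtain ⟨v, hv, hv'⟩ := exists_cumLE_one K x.1
    obtain ⟨w, hw, hw'⟩ := exists_cumLE_one K x.2
    refine ⟨(v, w), lt_max_of_lt_left ?_⟩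
    show 0 < min (cumLE K x.1.val v) (cumLE K x.2.val w) -
      max (cumLT K x.1.val v) (cumLT K x.2.val w)
    have h1 := Real.pos_of_ne K _ _ hv'
    have h2 := Real.pos_of_ne K _ _ hw'
    have h3 := cumLE_eq K x.1.val v
    have h4 := cumLE_eq K x.2.val w
    rw [sub_pos, hv, hw, min_self, max_lt_iff]
    constructor <;> linarith
  have hsupp : ∀ x p, prodW K x p ≠ 0 → x.1.val p.1 ≠ 0 ∧ x.2.val p.2 ≠ 0 := by
    intro x p h
    have h := prodW_ne_zero K x p h
    have h3 := cumLE_eq K x.1.val p.1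
    have h4 := cumLE_eq K x.2.val p.2
    constructor
    · intro hh; rw [hh] at h3; linarith [h.1]
    · intro hh; rw [hh] at h4; linarith [h.2.2.2]
  have hpos : ∀ x, 0 < ∑ p, prodW K x p := by
    intro x
    obtain ⟨p, hp⟩ := hne x
    exact Finset.sum_pos' (fun p _ => h0 x p) ⟨p, Finset.mem_univ _, hp⟩
  have hs : ∀ x, ∃ s ∈ (K.prod K).faces, ∀ p, prodW K x p ≠ 0 → p ∈ s := by
    classical
    intro x
    have hn : (Finset.univ.filter fun p => prodW K x p ≠ 0).Nonempty := by
      obtain ⟨p, hp⟩ := hne x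
      exact ⟨p, by simpa using hp.ne'⟩
    refine ⟨Finset.univ.filter fun p => prodW K x p ≠ 0, ⟨hn, ?_, ?_, ?_⟩,
      fun p hp => by simpa using hp⟩
    · intro a ha b hb
      have ha := (Finset.mem_filter.1 ha).2
      have hb := (Finset.mem_filter.1 hb).2
      have ha1 := hsupp x a ha
      have hb1 := hsupp x b hb
      have ha2 := prodW_ne_zero K x a ha
      have hb2 := prodW_ne_zero K x b hb
      have key1 : a.1 < b.1 → b.2 < a.2 → False := fun h1 h2 => by
        have := cumLE_le_cumLT K x.1 _ _ h1
        have := cumLE_le_cumLT K x.2 _ _ h2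
        linarith [ha2.2.2.1, hb2.2.1]
      have key2 : b.1 < a.1 → a.2 < b.2 → False := fun h1 h2 => by
        have := cumLE_le_cumLT K x.1 _ _ h1
        have := cumLE_le_cumLT K x.2 _ _ h2
        linarith [hb2.2.2.1, ha2.2.1]
      have c1 := K.face_chain _ (Real.supp_mem K x.1) a.1 ((Real.mem_supp _ _ _).2 ha1.1)
        b.1 ((Real.mem_supp _ _ _).2 hb1.1)
      have c2 := K.face_chain _ (Real.supp_mem K x.2) a.2 ((Real.mem_supp _ _ _).2 ha1.2)
        b.2 ((Real.mem_supp _ _ _).2 hb1.2)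
      show (a.1 ≤ b.1 ∧ a.2 ≤ b.2) ∨ (b.1 ≤ a.1 ∧ b.2 ≤ a.2)
      rcases c1 with c1 | c1 <;> rcases c2 with c2 | c2
      · exact Or.inl ⟨c1, c2⟩
      · rcases eq_or_lt_of_le c1 with e | l
        · exact Or.inr ⟨e.ge, c2⟩
        · rcases eq_or_lt_of_le c2 with e' | l'
          · exact Or.inl ⟨c1, e'.ge⟩
          · exact (key1 l l').elim
      · rcases eq_or_lt_of_le c1 with e | l
        · exact Or.inl ⟨e.ge, c2⟩
        · rcases eq_or_lt_of_le c2 with e' | l'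
          · exact Or.inr ⟨c1, e'.ge⟩
          · exact (key2 l l').elim
      · exact Or.inr ⟨c1, c2⟩
    · refine K.down_closed _ (Real.supp_mem K x.1) _ ?_ (hn.image _)
      intro v hv
      obtain ⟨p, hp, rfl⟩ := Finset.mem_image.1 hv
      exact (Real.mem_supp _ _ _).2 (hsupp x p (Finset.mem_filter.1 hp).2).1
    · refine K.down_closed _ (Real.supp_mem K x.2) _ ?_ (hn.image _)
      intro v hv
      obtain ⟨p, hp, rfl⟩ := Finset.mem_image.1 hv
      exact (Real.mem_supp _ _ _).2 (hsupp x p (Finset.mem_filter.1 hp).2).2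
  refine ⟨fun x => normReal (K.prod K) (prodW K x) (h0 x) (hpos x) (hs x), ?_, ?_, ?_⟩
  · refine continuous_normReal _ _ _ _ _ fun p => ?_
    unfold prodW
    have a1 := (continuous_cumLE K p.1).comp (continuous_fst (X := K.Real) (Y := K.Real))
    have a2 := (continuous_cumLE K p.2).comp (continuous_snd (X := K.Real) (Y := K.Real))
    have a3 := (continuous_cumLT K p.1).comp (continuous_fst (X := K.Real) (Y := K.Real))
    have a4 := (continuous_cumLT K p.2).comp (continuous_snd (X := K.Real) (Y := K.Real))
    exact ((a1.min a2).sub (a3.max a4)).max continuous_const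
  · intro g x
    refine normReal_smul _ g _ _ _ _ _ _ _ _ fun p => ?_
    show max (min (cumLE K (g • x.1).val (K.smul g p.1)) (cumLE K (g • x.2).val (K.smul g p.2)) -
      max (cumLT K (g • x.1).val (K.smul g p.1)) (cumLT K (g • x.2).val (K.smul g p.2))) 0 = _
    rw [cumLE_smul, cumLE_smul, cumLT_smul, cumLT_smul]
    rfl
  · intro x p h
    exact hsupp x p (normReal_ne_zero _ _ _ _ _ _ h)

lemma exists_toSdIter (K : GOSC G) (b : ℕ) :
    ∃ q : K.Real × K.Real → (sdIter b (K.prod K)).Real, Continuous q ∧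
    (∀ (g : G) x, q (g • x) = g • q x) ∧
    ∀ x v, (q x).val v ≠ 0 → x.1.val (tauIter b (K.prod K) v).1 ≠ 0 ∧
      x.2.val (tauIter b (K.prod K) v).2 ≠ 0 := by
  induction b with
  | zero => exact exists_toProd K
  | succ b ih =>
    obtain ⟨q, hq, he, hc⟩ := ih
    obtain ⟨q', hq', he', hc'⟩ := exists_toSd (sdIter b (K.prod K))
    refine ⟨q' ∘ q, hq'.comp hq, fun g x => ?_, fun x v h => ?_⟩
    · show q' (q (g • x)) = _
      rw [he, he']
      rfl
    · exact hc x _ (hc' _ v h _ (tau_mem _ v))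

end GOSC


namespace GOSC

variable {G : Type} [Group G]

/-! ### From simplicial to topological complexity -/

/-- Equivariance of a map defined on a subset of `|K| × |K|`. -/
def EqvMap (K : GOSC G) (U : Set (K.Real × K.Real)) (f : C(U, K.Real)) : Prop :=
  ∀ (g : G) (u : U) (h : g • (u : K.Real × K.Real) ∈ U), f ⟨g • (u : K.Real × K.Real), h⟩ = g • f u

lemma homotopic_of_line (K : GOSC G) (U : Set (K.Real × K.Real)) (p q : C(U, K.Real))
    (hp : EqvMap K U p) (hq : EqvMap K U q)
    (h : ∀ u, ∃ s ∈ K.faces, ∀ v, ((p u).val v ≠ 0 ∨ (q u).val v ≠ 0) → v ∈ s) :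
    ContinuousMap.HomotopicWith p q (EqvMap K U) := by
  have hmem : ∀ z : unitInterval × U, (fun v => (1 - (z.1 : ℝ)) * (p z.2).val v +
      (z.1 : ℝ) * (q z.2).val v) ∈ K.realSet := by
    intro z
    have t0 := z.1.2.1
    have t1 := z.1.2.2
    refine ⟨fun v => ?_, ?_, ?_⟩
    · exact add_nonneg (mul_nonneg (by linarith) ((p z.2).prop.1 v))
        (mul_nonneg t0 ((q z.2).prop.1 v))
    · rw [Finset.sum_add_distrib, ← Finset.mul_sum, ← Finset.mul_sum, (p z.2).prop.2.1,
        (q z.2).prop.2.1]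
      ring
    · obtain ⟨s, hs, hv⟩ := h z.2
      refine ⟨s, hs, fun v hne => hv v ?_⟩
      by_contra! hh
      apply hne
      show (1 - (z.1 : ℝ)) * (p z.2).val v + (z.1 : ℝ) * (q z.2).val v = 0
      rw [hh.1, hh.2]
      ring
  refine ⟨{ toFun := fun z => ⟨_, hmem z⟩
            continuous_toFun := ?_
            map_zero_left := ?_
            map_one_left := ?_
            prop' := ?_ }⟩
  · refine Continuous.subtype_mk (continuous_pi fun v => ?_) _
    have h1 : Continuous fun z : unitInterval × U => (p z.2).val v :=
      (Real.continuous_apply K v).comp (p.continuous.comp continuous_snd)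
    have h2 : Continuous fun z : unitInterval × U => (q z.2).val v :=
      (Real.continuous_apply K v).comp (q.continuous.comp continuous_snd)
    have h3 : Continuous fun z : unitInterval × U => (z.1 : ℝ) :=
      continuous_subtype_val.comp continuous_fst
    exact ((continuous_const.sub h3).mul h1).add (h3.mul h2)
  · intro u
    apply Subtype.ext
    funext v
    show (1 - (0 : ℝ)) * (p u).val v + (0 : ℝ) * (q u).val v = _
    ring
  · intro u
    apply Subtype.ext
    funext v
    show (1 - (1 : ℝ)) * (p u).val v + (1 : ℝ) * (q u).val v = _
    ring
  · intro t g u hu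
    apply Subtype.ext
    funext v
    show (1 - (t : ℝ)) * (p ⟨g • (u : K.Real × K.Real), hu⟩).val v +
      (t : ℝ) * (q ⟨g • (u : K.Real × K.Real), hu⟩).val v = _
    rw [hp, hq]
    rfl

lemma navigable_of_homotopic (K : GOSC G) (U : Set (K.Real × K.Real)) (p q : C(U, K.Real))
    (hp : ∀ u : U, p u = (u : K.Real × K.Real).1) (hq : ∀ u : U, q u = (u : K.Real × K.Real).2)
    (h : ContinuousMap.HomotopicWith p q (EqvMap K U)) : EqNavigable G K.Real U := by
  obtain ⟨F⟩ := h
  let F' : C(U × unitInterval, K.Real) :=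
    ⟨fun z => F (z.2, z.1), F.continuous.comp (continuous_snd.prodMk continuous_fst)⟩
  refine ⟨F'.curry, F'.curry.continuous, fun u => ⟨?_, ?_⟩, fun g u hu t => ?_⟩
  · exact (F.apply_zero u).trans (hp u)
  · exact (F.apply_one u).trans (hq u)
  · exact F.prop t g u hu

open Classical in
/-- Push forward of a weight along a vertex map. -/
noncomputable def pushW (L K : GOSC G) (f : L.V → K.V) (w : L.V → ℝ) (v : K.V) : ℝ :=
  ∑ u, if f u = v then w u else 0

lemma pushW_sum (L K : GOSC G) (f : L.V → K.V) (w : L.V → ℝ) :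
    ∑ v, pushW L K f w v = ∑ u, w u := by
  unfold pushW
  rw [Finset.sum_comm]
  refine Finset.sum_congr rfl fun u _ => ?_
  simp

lemma pushW_ne_zero (L K : GOSC G) (f : L.V → K.V) (w : L.V → ℝ) (v : K.V)
    (h : pushW L K f w v ≠ 0) : ∃ u, f u = v ∧ w u ≠ 0 := by
  obtain ⟨u, _, hu⟩ := Finset.exists_ne_zero_of_sum_ne_zero h
  refine ⟨u, ?_⟩
  by_cases e : f u = v
  · rw [if_pos e] at hu
    exact ⟨e, hu⟩
  · rw [if_neg e] at hu
    exact (hu rfl).elim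

lemma pushW_nonneg (L K : GOSC G) (f : L.V → K.V) (w : L.V → ℝ) (v : K.V)
    (h : ∀ u, 0 ≤ w u) : 0 ≤ pushW L K f w v := by
  refine Finset.sum_nonneg fun u _ => ?_
  split_ifs
  · exact h u
  · exact le_rfl

lemma pushW_smul (L K : GOSC G) (f : L.V → K.V) (w w' : L.V → ℝ) (g : G)
    (hw : ∀ u, w' (L.smul g u) = w u) (hf : ∀ u, w u ≠ 0 → f (L.smul g u) = K.smul g (f u))
    (v : K.V) : pushW L K f w' (K.smul g v) = pushW L K f w v := by
  unfold pushW
  rw [← sum_smul L g]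
  refine Finset.sum_congr rfl fun u _ => ?_
  rw [hw]
  by_cases h : w u = 0
  · rw [h]; simp
  · rw [hf u h]
    classical exact if_congr (K.smul_inj g).eq_iff rfl rfl

lemma continuous_pushW (L K : GOSC G) {X : Type*} [TopologicalSpace X] (f : L.V → K.V)
    (w : X → L.V → ℝ) (hw : ∀ u, Continuous fun x => w x u) (v : K.V) :
    Continuous fun x => pushW L K f (w x) v := by
  refine continuous_finsetSum _ fun u _ => ?_
  split_ifs
  · exact hw u
  · exact continuous_const

lemma navigable_of_contig (K L : GOSC G) (t₁ t₂ : L.V → K.V) (Q : K.Real × K.Real → (sd L).Real)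
    (hQ : Continuous Q) (hQe : ∀ (g : G) x, Q (g • x) = g • Q x)
    (hQ1 : ∀ x σ, (Q x).val σ ≠ 0 → x.1.val (t₁ (L.tau σ)) ≠ 0)
    (hQ2 : ∀ x σ, (Q x).val σ ≠ 0 → x.2.val (t₂ (L.tau σ)) ≠ 0)
    (Λ : Set (Finset L.V))
    (hΛg : ∀ g : G, ∀ s ∈ Λ, s.image (L.smul g) ∈ Λ) (c : ℕ)
    (hc : ContigOn L K t₁ t₂ Λ c) :
    EqNavigable G K.Real {x | ∃ σ : (sd L).V, σ.val ∈ Λ ∧ (Q x).val σ ≠ 0} := by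
  classical
  obtain ⟨φ, h0, h1, hφs, hφe, hφc⟩ := hc
  set U : Set (K.Real × K.Real) := {x | ∃ σ : (sd L).V, σ.val ∈ Λ ∧ (Q x).val σ ≠ 0} with hU
  have hΛg' : ∀ (g : G) (σ : (sd L).V), ((sd L).smul g σ).val ∈ Λ ↔ σ.val ∈ Λ := by
    intro g σ
    constructor
    · intro h
      have := hΛg g⁻¹ _ h
      have e : ((sd L).smul g⁻¹ ((sd L).smul g σ)).val ∈ Λ := this
      rwa [inv_smul_smul'] at e
    · exact hΛg g _
  -- the weights
  let w : U → (sd L).V → ℝ := fun u σ => if σ.val ∈ Λ then (Q u).val σ else 0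
  have hw0 : ∀ u σ, 0 ≤ w u σ := by
    intro u σ
    show 0 ≤ if σ.val ∈ Λ then (Q u).val σ else 0
    split_ifs
    · exact (Q u).prop.1 σ
    · exact le_rfl
  have hwne : ∀ u σ, w u σ ≠ 0 → σ.val ∈ Λ ∧ (Q u).val σ ≠ 0 := by
    intro u σ h
    by_cases e : σ.val ∈ Λ
    · exact ⟨e, by simpa [w, e] using h⟩
    · exact (h (if_neg e)).elim
  have hwpos : ∀ u, 0 < ∑ σ, w u σ := by
    intro u
    obtain ⟨σ, hσ, hσ'⟩ := u.2
    refine Finset.sum_pos' (fun σ _ => hw0 u σ) ⟨σ, Finset.mem_univ _, ?_⟩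
    show 0 < if σ.val ∈ Λ then (Q u).val σ else 0
    rw [if_pos hσ]
    exact Real.pos_of_ne _ _ _ hσ'
  have hwc : ∀ σ, Continuous fun u => w u σ := by
    intro σ
    show Continuous fun u : U => if σ.val ∈ Λ then (Q u).val σ else 0
    by_cases e : σ.val ∈ Λ
    · simp only [if_pos e]
      exact (Real.continuous_apply _ σ).comp (hQ.comp continuous_subtype_val)
    · simp only [if_neg e]
      exact continuous_const
  have hwg : ∀ (g : G) (u : U) (h : g • (u : K.Real × K.Real) ∈ U) σ,
      w ⟨g • (u : K.Real × K.Real), h⟩ ((sd L).smul g σ) = w u σ := by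
    intro g u h σ
    show (if ((sd L).smul g σ).val ∈ Λ then (Q (g • (u : K.Real × K.Real))).val _ else 0) = _
    rw [hQe, smul_apply, inv_smul_smul']
    exact if_congr (hΛg' g σ) rfl rfl
  have htop : ∀ u : U, ∃ s ∈ Λ, ∀ σ, w u σ ≠ 0 → L.tau σ ∈ s := by
    intro u
    have hsub : (Finset.univ.filter fun σ => w u σ ≠ 0) ∈ (sd L).faces := by
      refine (sd L).down_closed _ (Real.supp_mem _ (Q u)) _ (fun σ hσ => ?_) ?_
      · exact (Real.mem_supp _ _ _).2 (hwne u σ (Finset.mem_filter.1 hσ).2).2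
      · obtain ⟨σ, _, hσ⟩ := Finset.exists_ne_zero_of_sum_ne_zero (hwpos u).ne'
        exact ⟨σ, Finset.mem_filter.2 ⟨Finset.mem_univ _, hσ⟩⟩
    obtain ⟨m, hm, hmax⟩ := (sd L).exists_greatest _ hsub
    refine ⟨m.val, (hwne u m (Finset.mem_filter.1 hm).2).1, fun σ hσ => ?_⟩
    exact hmax σ (Finset.mem_filter.2 ⟨Finset.mem_univ _, hσ⟩) (L.tau_mem σ)
  -- the intermediate maps
  let f : Fin (c + 1) → (sd L).V → K.V := fun j σ => φ j (L.tau σ)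
  have hs : ∀ j u, ∃ s ∈ K.faces, ∀ v, pushW (sd L) K (f j) (w u) v ≠ 0 → v ∈ s := by
    intro j u
    obtain ⟨s, hs, h⟩ := htop u
    refine ⟨_, hφs j s hs, fun v hv => ?_⟩
    obtain ⟨σ, rfl, hσ⟩ := pushW_ne_zero _ _ _ _ _ hv
    exact Finset.mem_image_of_mem _ (h σ hσ)
  have hpp : ∀ j u, 0 < ∑ v, pushW (sd L) K (f j) (w u) v := fun j u => by
    rw [pushW_sum]; exact hwpos u
  let y : Fin (c + 1) → C(U, K.Real) := fun j =>
    ⟨fun u => normReal K (pushW (sd L) K (f j) (w u)) (fun v => pushW_nonneg _ _ _ _ _ (hw0 u))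
      (hpp j u) (hs j u), continuous_normReal _ _ _ _ _ fun v => continuous_pushW _ _ _ _ hwc v⟩
  have hyne : ∀ j u v, (y j u).val v ≠ 0 → ∃ σ, φ j (L.tau σ) = v ∧ w u σ ≠ 0 := fun j u v h =>
    pushW_ne_zero _ _ _ _ _ (normReal_ne_zero K _ (fun v => pushW_nonneg _ _ _ _ _ (hw0 u))
      (hpp j u) (hs j u) v h)
  have hye : ∀ j, EqvMap K U (y j) := by
    intro j g u hu
    refine normReal_smul K g (pushW (sd L) K (f j) (w u))
      (pushW (sd L) K (f j) (w ⟨g • (u : K.Real × K.Real), hu⟩))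
      (fun v => pushW_nonneg _ _ _ _ _ (hw0 u)) (fun v => pushW_nonneg _ _ _ _ _ (hw0 _))
      (hpp j u) (hpp j _) (hs j u) (hs j _) fun v => ?_
    refine pushW_smul _ _ _ _ _ g (hwg g u hu) (fun σ hσ => ?_) v
    show φ j (L.tau ((sd L).smul g σ)) = _
    rw [tau_smul]
    exact hφe j g _ (hwne u σ hσ).1 _ (L.tau_mem σ)
  let p₁ : C(U, K.Real) := ⟨fun u => (u : K.Real × K.Real).1, by fun_prop⟩
  let p₂ : C(U, K.Real) := ⟨fun u => (u : K.Real × K.Real).2, by fun_prop⟩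
  have hchain : ∀ j : ℕ, ∀ hj : j < c + 1,
      ContinuousMap.HomotopicWith (y 0) (y ⟨j, hj⟩) (EqvMap K U) := by
    intro j
    induction j with
    | zero => exact fun _ => ContinuousMap.HomotopicWith.refl _ (hye 0)
    | succ j ih =>
      intro hj
      refine (ih (by omega)).trans ?_
      refine homotopic_of_line K U _ _ (hye _) (hye _) fun u => ?_
      obtain ⟨s, hs, h⟩ := htop u
      refine ⟨_, hφc ⟨j, by omega⟩ s hs, fun v hv => ?_⟩
      rcases hv with hv | hv
      · obtain ⟨σ, rfl, hσ⟩ := hyne _ _ _ hv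
        exact Finset.mem_union_left _ (Finset.mem_image_of_mem _ (h σ hσ))
      · obtain ⟨σ, rfl, hσ⟩ := hyne _ _ _ hv
        exact Finset.mem_union_right _ (Finset.mem_image_of_mem _ (h σ hσ))
  have hfirst : ContinuousMap.HomotopicWith p₁ (y 0) (EqvMap K U) := by
    refine homotopic_of_line K U _ _ (fun g u hu => rfl) (hye _) fun u => ?_
    refine ⟨_, Real.supp_mem K (u : K.Real × K.Real).1, fun v hv => (Real.mem_supp _ _ _).2 ?_⟩
    rcases hv with hv | hv
    · exact hv
    · obtain ⟨σ, rfl, hσ⟩ := hyne _ _ _ hv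
      rw [h0 _ (hwne u σ hσ).1 _ (L.tau_mem σ)]
      exact hQ1 _ _ (hwne u σ hσ).2
  have hlast : ContinuousMap.HomotopicWith (y (Fin.last c)) p₂ (EqvMap K U) := by
    refine homotopic_of_line K U _ _ (hye _) (fun g u hu => rfl) fun u => ?_
    refine ⟨_, Real.supp_mem K (u : K.Real × K.Real).2, fun v hv => (Real.mem_supp _ _ _).2 ?_⟩
    rcases hv with hv | hv
    · obtain ⟨σ, rfl, hσ⟩ := hyne _ _ _ hv
      rw [h1 _ (hwne u σ hσ).1 _ (L.tau_mem σ)]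
      exact hQ2 _ _ (hwne u σ hσ).2
    · exact hv
  exact navigable_of_homotopic K U p₁ p₂ (fun _ => rfl) (fun _ => rfl)
    ((hfirst.trans (hchain c (Nat.lt_succ_self c))).trans hlast)

lemma eqTC_le_SCG (K : GOSC G) : eqTC G K.Real ≤ K.SCG := by
  refine le_iInf fun b => le_iInf fun c => le_sInf ?_
  rintro k ⟨n, rfl, Λ, hΛf, hΛd, hΛg, hΛc, hcont⟩
  refine sInf_le ⟨n, rfl, ?_⟩
  obtain ⟨Q, hQ, hQe, hQs⟩ := exists_toSdIter K b
  obtain ⟨q, hq, hqe, hqs⟩ := exists_toSd (sdIter b (K.prod K))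
  refine ⟨fun i => {x | ∃ σ : (sd (sdIter b (K.prod K))).V, σ.val ∈ Λ i ∧ (q (Q x)).val σ ≠ 0},
    fun i => ?_, fun i g x => ?_, ?_, fun i => ?_⟩
  · have : {x | ∃ σ : (sd (sdIter b (K.prod K))).V, σ.val ∈ Λ i ∧ (q (Q x)).val σ ≠ 0} =
      ⋃ σ : (sd (sdIter b (K.prod K))).V, ⋃ _ : σ.val ∈ Λ i, {x | (q (Q x)).val σ ≠ 0} := by
      ext x; simp
    refine (congrArg IsOpen this).mpr ?_
    refine isOpen_iUnion fun σ => isOpen_iUnion fun _ => ?_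
    exact isOpen_ne_fun ((Real.continuous_apply _ σ).comp (hq.comp hQ)) continuous_const
  · rintro ⟨σ, hσ, h⟩
    refine ⟨(sd (sdIter b (K.prod K))).smul g σ, hΛg i g _ hσ, ?_⟩
    rw [hQe, hqe, smul_apply, inv_smul_smul']
    exact h
  · rw [Set.eq_univ_iff_forall]
    intro x
    obtain ⟨σ, hσ⟩ := Real.exists_pos _ (q (Q x))
    obtain ⟨i, hi⟩ := Set.mem_iUnion.1 (hΛc σ.prop)
    exact Set.mem_iUnion.2 ⟨i, σ, hi, hσ.ne'⟩
  · refine navigable_of_contig K _ _ _ (fun x => q (Q x)) (hq.comp hQ)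
      (fun g x => ?_) (fun x σ h => ?_) (fun x σ h => ?_) (Λ i) (hΛg i) c (hcont i)
    · show q (Q (g • x)) = _
      rw [hQe, hqe]
    · exact (hQs x _ (hqs _ σ h _ (tau_mem _ σ))).1
    · exact (hQs x _ (hqs _ σ h _ (tau_mem _ σ))).2

end GOSC


namespace GOSC

variable {G : Type} [Group G]

/-! ### Metric structure -/

noncomputable instance (K : GOSC G) : MetricSpace K.Real :=
  inferInstanceAs (MetricSpace {f : K.V → ℝ // f ∈ K.realSet})

lemma isCompact_realSet (K : GOSC G) : IsCompact K.realSet := by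
  have hb : K.realSet ⊆ Set.Icc (fun _ => 0) (fun _ => 1) := by
    intro f hf
    refine ⟨fun v => hf.1 v, fun v => ?_⟩
    show f v ≤ 1
    rw [← hf.2.1]
    exact Finset.single_le_sum (fun u _ => hf.1 u) (Finset.mem_univ v)
  refine isCompact_Icc.of_isClosed_subset ?_ hb
  have h1 : IsClosed {f : K.V → ℝ | ∀ v, 0 ≤ f v} := by
    simp only [Set.setOf_forall]
    exact isClosed_iInter fun v => isClosed_le continuous_const (_root_.continuous_apply v)
  have h2 : IsClosed {f : K.V → ℝ | ∑ v, f v = 1} :=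
    isClosed_eq (continuous_finsetSum _ fun v _ => _root_.continuous_apply v) continuous_const
  have h3 : IsClosed {f : K.V → ℝ | ∃ s ∈ K.faces, ∀ v, f v ≠ 0 → v ∈ s} := by
    have : {f : K.V → ℝ | ∃ s ∈ K.faces, ∀ v, f v ≠ 0 → v ∈ s} =
        ⋃ s ∈ K.faces, ⋂ v, ⋂ (_ : v ∉ s), {f | f v = 0} := by
      ext f
      simp only [Set.mem_setOf_eq, Set.mem_iUnion, Set.mem_iInter, exists_prop]
      refine exists_congr fun s => and_congr_right fun _ => forall_congr' fun v => ?_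
      exact not_imp_comm
    rw [this]
    refine (Set.toFinite K.faces).isClosed_biUnion fun s _ => ?_
    exact isClosed_iInter fun v => isClosed_iInter fun _ =>
      isClosed_eq (_root_.continuous_apply v) continuous_const
  exact h1.inter (h2.inter h3)

instance (K : GOSC G) : CompactSpace K.Real :=
  isCompact_iff_compactSpace.1 (isCompact_realSet K)

lemma dist_smul_le (K : GOSC G) (g : G) (x y : K.Real) : dist (g • x) (g • y) ≤ dist x y := by
  show dist (g • x).val (g • y).val ≤ dist x.val y.val
  rw [dist_pi_le_iff dist_nonneg]
  intro v
  exact dist_le_pi_dist x.val y.val (K.smul g⁻¹ v)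

lemma dist_smul_le' (K : GOSC G) (g : G) (x y : K.Real × K.Real) :
    dist (g • x) (g • y) ≤ dist x y :=
  max_le_max (dist_smul_le K g x.1 y.1) (dist_smul_le K g x.2 y.2)

/-! ### Barycenters -/

/-- The barycenter of finitely many points. -/
noncomputable def bary {V E : Type*} [AddCommGroup E] [Module ℝ E] (β : V → E) (s : Finset V) : E :=
  ∑ v ∈ s, (s.card : ℝ)⁻¹ • β v

lemma bary_mem {V E : Type*} [AddCommGroup E] [Module ℝ E] (β : V → E) (s : Finset V)
    (hs : s.Nonempty) (C : Set E) (hC : Convex ℝ C) (h : ∀ v ∈ s, β v ∈ C) : bary β s ∈ C := by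
  refine hC.sum_mem (fun v _ => by positivity) ?_ h
  rw [Finset.sum_const, nsmul_eq_mul, mul_inv_cancel₀]
  exact_mod_cast hs.card_pos.ne'

lemma norm_sub_bary_le {V E : Type*} [NormedAddCommGroup E] [NormedSpace ℝ E] (β : V → E)
    (s : Finset V) (d : ℝ) (N : ℕ) (hN : s.card ≤ N) (u : V) (hu : u ∈ s) (hd : 0 ≤ d)
    (h : ∀ v ∈ s, ‖β u - β v‖ ≤ d) : ‖β u - bary β s‖ ≤ (1 - (N : ℝ)⁻¹) * d := by
  classical
  have hc : (0 : ℝ) < s.card := by exact_mod_cast Finset.card_pos.2 ⟨u, hu⟩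
  have e : β u - bary β s = ∑ v ∈ s.erase u, (s.card : ℝ)⁻¹ • (β u - β v) := by
    have : ∑ v ∈ s.erase u, (s.card : ℝ)⁻¹ • (β u - β v) =
        ∑ v ∈ s, (s.card : ℝ)⁻¹ • (β u - β v) := by
      rw [← Finset.add_sum_erase s _ hu, sub_self, smul_zero, zero_add]
    rw [this]
    simp only [smul_sub, Finset.sum_sub_distrib]
    rw [Finset.sum_const, ← Nat.cast_smul_eq_nsmul ℝ, smul_smul, mul_inv_cancel₀ hc.ne', one_smul]
    rfl
  rw [e]
  calc _ ≤ ∑ v ∈ s.erase u, (s.card : ℝ)⁻¹ * d := by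
        refine norm_sum_le_of_le _ fun v hv => ?_
        rw [norm_smul, Real.norm_of_nonneg (by positivity)]
        exact mul_le_mul_of_nonneg_left (h v (Finset.mem_of_mem_erase hv)) (by positivity)
    _ = (1 - (s.card : ℝ)⁻¹) * d := by
        rw [Finset.sum_const, nsmul_eq_mul, Finset.card_erase_of_mem hu,
          Nat.cast_sub (Finset.card_pos.2 ⟨u, hu⟩)]
        field_simp
        push_cast
        ring
    _ ≤ (1 - (N : ℝ)⁻¹) * d := by
        refine mul_le_mul_of_nonneg_right ?_ hd
        have : (N : ℝ)⁻¹ ≤ (s.card : ℝ)⁻¹ := inv_anti₀ hc (by exact_mod_cast hN)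
        linarith

/-- The points of `E` corresponding to the vertices of iterated subdivisions. -/
noncomputable def betaIter (M : GOSC G) {E : Type*} [AddCommGroup E] [Module ℝ E] (β : M.V → E) :
    (n : ℕ) → (sdIter n M).V → E
  | 0 => β
  | (n + 1) => fun s => bary (betaIter M β n) s.val

lemma betaIter_hull (M : GOSC G) {E : Type*} [AddCommGroup E] [Module ℝ E] (β : M.V → E) (n : ℕ) :
    ∀ s ∈ (sdIter n M).faces, ∃ t ∈ M.faces, ∀ v ∈ s,
      betaIter M β n v ∈ convexHull ℝ (β '' (t : Set M.V)) := by
  induction n with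
  | zero =>
    intro s hs
    exact ⟨s, hs, fun v hv => subset_convexHull ℝ _ ⟨v, hv, rfl⟩⟩
  | succ n ih =>
    intro s hs
    obtain ⟨a, _, hmax⟩ := (sd (sdIter n M)).exists_greatest s hs
    obtain ⟨t, ht, h⟩ := ih a.val a.prop
    refine ⟨t, ht, fun b hb => ?_⟩
    exact bary_mem _ _ ((sdIter n M).nonempty_of_mem _ b.prop) _ (convex_convexHull ℝ _)
      fun v hv => h v (hmax b hb hv)

lemma betaIter_smul (M : GOSC G) {E : Type*} [AddCommGroup E] [Module ℝ E] (β : M.V → E) (g : G)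
    (A : E →ₗ[ℝ] E) (hA : ∀ v, β (M.smul g v) = A (β v)) (n : ℕ) :
    ∀ v, betaIter M β n ((sdIter n M).smul g v) = A (betaIter M β n v) := by
  induction n with
  | zero => exact hA
  | succ n ih =>
    intro s
    show bary (betaIter M β n) (Finset.image ((sdIter n M).smul g) s.val) =
      A (bary (betaIter M β n) s.val)
    unfold bary
    rw [Finset.sum_image fun a _ b _ h => (sdIter n M).smul_inj g h,
      Finset.card_image_of_injective _ ((sdIter n M).smul_inj g), map_sum]
    refine Finset.sum_congr rfl fun v _ => ?_
    rw [ih, map_smul]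

lemma mesh (M : GOSC G) {E : Type*} [NormedAddCommGroup E] [NormedSpace ℝ E] (β : M.V → E)
    (N : ℕ) (D : ℝ) (hD : 0 ≤ D) (hN1 : 1 ≤ N) (hN : ∀ s ∈ M.faces, s.card ≤ N)
    (hβ : ∀ u v, ‖β u - β v‖ ≤ D) (n : ℕ) :
    (∀ s ∈ (sdIter n M).faces, s.card ≤ N) ∧ ∀ s ∈ (sdIter n M).faces, ∀ u ∈ s, ∀ v ∈ s,
      ‖betaIter M β n u - betaIter M β n v‖ ≤ (1 - (N : ℝ)⁻¹) ^ n * D := by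
  have hq : 0 ≤ 1 - (N : ℝ)⁻¹ := by
    rw [sub_nonneg]
    exact inv_le_one_of_one_le₀ (by exact_mod_cast hN1)
  induction n with
  | zero =>
    refine ⟨hN, fun s _ u _ v _ => ?_⟩
    rw [pow_zero, one_mul]
    exact hβ u v
  | succ n ih =>
    obtain ⟨ih1, ih2⟩ := ih
    refine ⟨fun s hs => ?_, ?_⟩
    · have hcard : (Finset.Icc 1 N).card = N := by simp
      rw [← hcard]
      refine Finset.card_le_card_of_injOn
        (fun a : {a : Finset (sdIter n M).V // a ∈ (sdIter n M).faces} => a.val.card) ?_ ?_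
      · intro a _
        refine Finset.mem_coe.2 (Finset.mem_Icc.2 ⟨?_, ih1 a.val a.prop⟩)
        exact Finset.card_pos.2 ((sdIter n M).nonempty_of_mem _ a.prop)
      · intro a ha b hb hab
        rcases hs.2 a ha b hb with h | h
        · exact Subtype.ext (Finset.eq_of_subset_of_card_le h hab.ge)
        · exact (Subtype.ext (Finset.eq_of_subset_of_card_le h hab.le)).symm
    · have key : ∀ a b : {a : Finset (sdIter n M).V // a ∈ (sdIter n M).faces}, a.val ⊆ b.val →
          ‖bary (betaIter M β n) a.val - bary (betaIter M β n) b.val‖ ≤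
            (1 - (N : ℝ)⁻¹) ^ (n + 1) * D := by
        intro a b hab
        have : bary (betaIter M β n) a.val ∈ Metric.closedBall (bary (betaIter M β n) b.val)
            ((1 - (N : ℝ)⁻¹) ^ (n + 1) * D) := by
          refine bary_mem _ _ ((sdIter n M).nonempty_of_mem _ a.prop) _ (convex_closedBall _ _) ?_
          intro v hv
          rw [mem_closedBall_iff_norm, pow_succ', mul_assoc]
          exact norm_sub_bary_le _ _ _ N (ih1 _ b.prop) v (hab hv) (by positivity)
            fun w hw => ih2 _ b.prop v (hab hv) w hw
        rwa [mem_closedBall_iff_norm] at this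
      intro s hs a ha b hb
      rcases hs.2 a ha b hb with h | h
      · exact key a b h
      · rw [norm_sub_rev]
        exact key b a h

end GOSC


namespace GOSC

variable {G : Type} [Group G]

/-! ### The points of `|K| × |K|` attached to simplices of iterated subdivisions -/

/-- Convex subset of pairs of functions supported on given finite sets. -/
def pairSet (K : GOSC G) (a b : Finset K.V) : Set ((K.V → ℝ) × (K.V → ℝ)) :=
  {f | ((∀ v, 0 ≤ f.1 v) ∧ ∑ v, f.1 v = 1 ∧ ∀ v, v ∉ a → f.1 v = 0) ∧
    ((∀ v, 0 ≤ f.2 v) ∧ ∑ v, f.2 v = 1 ∧ ∀ v, v ∉ b → f.2 v = 0)}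

lemma convex_simplexOn {V : Type*} [Fintype V] (a : Finset V) :
    Convex ℝ {f : V → ℝ | (∀ v, 0 ≤ f v) ∧ ∑ v, f v = 1 ∧ ∀ v, v ∉ a → f v = 0} := by
  rintro f ⟨f1, f2, f3⟩ g ⟨g1, g2, g3⟩ p q hp hq hpq
  refine ⟨fun v => ?_, ?_, fun v hv => ?_⟩
  · exact add_nonneg (mul_nonneg hp (f1 v)) (mul_nonneg hq (g1 v))
  · show ∑ v, (p * f v + q * g v) = 1
    rw [Finset.sum_add_distrib, ← Finset.mul_sum, ← Finset.mul_sum, f2, g2, mul_one, mul_one, hpq]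
  · show p * f v + q * g v = 0
    rw [f3 v hv, g3 v hv, mul_zero, mul_zero, add_zero]

lemma convex_pairSet (K : GOSC G) (a b : Finset K.V) : Convex ℝ (pairSet K a b) :=
  (convex_simplexOn a).prod (convex_simplexOn b)

/-- The pair of Dirac functions at a vertex of the product. -/
noncomputable def beta0 (K : GOSC G) (v : (K.prod K).V) : (K.V → ℝ) × (K.V → ℝ) :=
  (Pi.single v.1 1, Pi.single v.2 1)

lemma betaIter_pairSet (K : GOSC G) (n : ℕ) (v : (sdIter n (K.prod K)).V) :
    ∃ a ∈ K.faces, ∃ b ∈ K.faces, betaIter (K.prod K) (beta0 K) n v ∈ pairSet K a b := by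
  obtain ⟨t, ht, h⟩ := betaIter_hull (K.prod K) (beta0 K) n {v} ((sdIter n _).singleton_mem v)
  refine ⟨_, ht.2.2.1, _, ht.2.2.2, ?_⟩
  refine convexHull_min ?_ (convex_pairSet K _ _) (h v (Finset.mem_singleton_self v))
  rintro _ ⟨p, hp, rfl⟩
  have hS : ∀ (u : K.V) (a : Finset K.V), u ∈ a → (∀ v, 0 ≤ (Pi.single u 1 : K.V → ℝ) v) ∧
      ∑ v, (Pi.single u 1 : K.V → ℝ) v = 1 ∧ ∀ v, v ∉ a → (Pi.single u 1 : K.V → ℝ) v = 0 := by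
    intro u a hu
    refine ⟨fun v => ?_, ?_, fun v hv => ?_⟩
    · rw [Pi.single_apply]; split_ifs <;> norm_num
    · simp
    · rw [Pi.single_apply, if_neg]
      rintro rfl
      exact hv hu
  exact ⟨hS p.1 _ (Finset.mem_image_of_mem Prod.fst hp), hS p.2 _ (Finset.mem_image_of_mem Prod.snd hp)⟩

/-- The point of `|K| × |K|` attached to a vertex of the iterated subdivision. -/
noncomputable def pt (K : GOSC G) (n : ℕ) (v : (sdIter n (K.prod K)).V) : K.Real × K.Real :=
  (⟨(betaIter (K.prod K) (beta0 K) n v).1, by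
    obtain ⟨a, ha, b, hb, h⟩ := betaIter_pairSet K n v
    exact ⟨h.1.1, h.1.2.1, a, ha, fun v hv => by_contra fun hva => hv (h.1.2.2 v hva)⟩⟩,
   ⟨(betaIter (K.prod K) (beta0 K) n v).2, by
    obtain ⟨a, ha, b, hb, h⟩ := betaIter_pairSet K n v
    exact ⟨h.2.1, h.2.2.1, b, hb, fun v hv => by_contra fun hva => hv (h.2.2.2 v hva)⟩⟩)

lemma pt_smul (K : GOSC G) (n : ℕ) (g : G) (v : (sdIter n (K.prod K)).V) :
    pt K n ((sdIter n (K.prod K)).smul g v) = g • pt K n v := by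
  have := betaIter_smul (K.prod K) (beta0 K) g
    ((LinearMap.funLeft ℝ ℝ (K.smul g⁻¹)).prodMap (LinearMap.funLeft ℝ ℝ (K.smul g⁻¹))) (by
      have hS : ∀ u : K.V, (Pi.single (K.smul g u) 1 : K.V → ℝ) =
          LinearMap.funLeft ℝ ℝ (K.smul g⁻¹) (Pi.single u 1) := by
        intro u
        funext w
        rw [LinearMap.funLeft_apply, Pi.single_apply, Pi.single_apply]
        refine if_congr ⟨?_, ?_⟩ rfl rfl
        · rintro rfl
          exact inv_smul_smul' K g u
        · rintro rfl
          exact (smul_inv_smul' K g w).symm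
      intro v
      exact Prod.ext (hS v.1) (hS v.2)) n v
  exact Prod.ext (Subtype.ext (congrArg Prod.fst this)) (Subtype.ext (congrArg Prod.snd this))

lemma bary_fst_pos {V W : Type*} (β : V → (W → ℝ) × (W → ℝ)) (s : Finset V) (v : V) (hv : v ∈ s)
    (w : W) (h0 : ∀ u ∈ s, 0 ≤ (β u).1 w) (hp : 0 < (β v).1 w) : 0 < (bary β s).1 w := by
  have hc : (0 : ℝ) < s.card := by exact_mod_cast Finset.card_pos.2 ⟨v, hv⟩
  unfold bary
  rw [Prod.fst_sum, Finset.sum_apply]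
  exact Finset.sum_pos' (fun u hu => mul_nonneg (by positivity) (h0 u hu))
    ⟨v, hv, mul_pos (by positivity) hp⟩

lemma bary_snd_pos {V W : Type*} (β : V → (W → ℝ) × (W → ℝ)) (s : Finset V) (v : V) (hv : v ∈ s)
    (w : W) (h0 : ∀ u ∈ s, 0 ≤ (β u).2 w) (hp : 0 < (β v).2 w) : 0 < (bary β s).2 w := by
  have hc : (0 : ℝ) < s.card := by exact_mod_cast Finset.card_pos.2 ⟨v, hv⟩
  unfold bary
  rw [Prod.snd_sum, Finset.sum_apply]
  exact Finset.sum_pos' (fun u hu => mul_nonneg (by positivity) (h0 u hu))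
    ⟨v, hv, mul_pos (by positivity) hp⟩

lemma bary_betaIter_pos (K : GOSC G) (n : ℕ) (s : Finset (sdIter n (K.prod K)).V)
    (v : (sdIter n (K.prod K)).V) (hv : v ∈ s)
    (h1 : 0 < (betaIter (K.prod K) (beta0 K) n v).1 (tauIter n (K.prod K) v).1)
    (h2 : 0 < (betaIter (K.prod K) (beta0 K) n v).2 (tauIter n (K.prod K) v).2) :
    0 < (bary (betaIter (K.prod K) (beta0 K) n) s).1 (tauIter n (K.prod K) v).1 ∧
    0 < (bary (betaIter (K.prod K) (beta0 K) n) s).2 (tauIter n (K.prod K) v).2 := by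
  constructor
  · refine bary_fst_pos _ _ v hv _ (fun u _ => ?_) h1
    obtain ⟨a, _, b, _, h⟩ := betaIter_pairSet K n u
    exact h.1.1 _
  · refine bary_snd_pos _ _ v hv _ (fun u _ => ?_) h2
    obtain ⟨a, _, b, _, h⟩ := betaIter_pairSet K n u
    exact h.2.1 _

lemma betaIter_pos (K : GOSC G) (n : ℕ) : ∀ v : (sdIter n (K.prod K)).V,
    0 < (betaIter (K.prod K) (beta0 K) n v).1 (tauIter n (K.prod K) v).1 ∧
    0 < (betaIter (K.prod K) (beta0 K) n v).2 (tauIter n (K.prod K) v).2 := by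
  induction n with
  | zero =>
    intro v
    constructor
    · show 0 < (Pi.single v.1 1 : K.V → ℝ) v.1
      rw [Pi.single_eq_same]; exact one_pos
    · show 0 < (Pi.single v.2 1 : K.V → ℝ) v.2
      rw [Pi.single_eq_same]; exact one_pos
  | succ n ih =>
    intro s
    have hm := tau_mem (sdIter n (K.prod K)) s
    exact bary_betaIter_pos K n s.val _ hm (ih _).1 (ih _).2

lemma exists_pair {α : Type*} (a b : α) : ∃ p : Finset α, ∀ c, c ∈ p ↔ c = a ∨ c = b := by
  classical
  exact ⟨{a, b}, fun c => by rw [Finset.mem_insert, Finset.mem_singleton]⟩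

lemma exists_points (K : GOSC G) (ε : ℝ) (hε : 0 < ε) : ∃ (B : ℕ)
    (x : (sd (sdIter B (K.prod K))).V → K.Real × K.Real),
    (∀ (g : G) s, x ((sd (sdIter B (K.prod K))).smul g s) = g • x s) ∧
    (∀ s t, s.val ⊆ t.val → dist (x s) (x t) < ε) ∧
    (∀ s, ∀ v ∈ s.val, (x s).1.val (tauIter B (K.prod K) v).1 ≠ 0 ∧
      (x s).2.val (tauIter B (K.prod K) v).2 ≠ 0) := by
  set N : ℕ := Fintype.card (K.prod K).V + 1 with hN
  set D : ℝ := ∑ u, ∑ v, ‖beta0 K u - beta0 K v‖ with hD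
  have hD0 : 0 ≤ D := Finset.sum_nonneg fun _ _ => Finset.sum_nonneg fun _ _ => norm_nonneg _
  have hDβ : ∀ u v, ‖beta0 K u - beta0 K v‖ ≤ D := by
    intro u v
    refine le_trans ?_ (Finset.single_le_sum (f := fun u => ∑ v, ‖beta0 K u - beta0 K v‖)
      (fun _ _ => Finset.sum_nonneg fun _ _ => norm_nonneg _) (Finset.mem_univ u))
    exact Finset.single_le_sum (f := fun v => ‖beta0 K u - beta0 K v‖)
      (fun _ _ => norm_nonneg _) (Finset.mem_univ v)
  have hm := mesh (K.prod K) (beta0 K) N D hD0 (by omega)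
    (fun s _ => (Finset.card_le_univ s).trans (by omega)) hDβ
  have hNpos : (0 : ℝ) < N := by rw [hN]; positivity
  have hN1 : (1 : ℝ) ≤ N := by rw [hN]; push_cast; linarith [Nat.cast_nonneg (α := ℝ) (Fintype.card (K.prod K).V)]
  have hq0 : 0 ≤ 1 - (N : ℝ)⁻¹ := by
    rw [sub_nonneg]
    exact inv_le_one_of_one_le₀ hN1
  have hq1 : 1 - (N : ℝ)⁻¹ < 1 := by
    have : 0 < (N : ℝ)⁻¹ := by positivity
    linarith
  have ht : Filter.Tendsto (fun n : ℕ => (1 - (N : ℝ)⁻¹) ^ (n + 1) * D) Filter.atTop (nhds 0) := by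
    have := ((tendsto_pow_atTop_nhds_zero_of_lt_one hq0 hq1).comp
      (Filter.tendsto_add_atTop_nat 1)).mul_const D
    rwa [zero_mul] at this
  obtain ⟨B, hB⟩ := (ht.eventually (gt_mem_nhds hε)).exists
  refine ⟨B, fun s => pt K (B + 1) s, fun g s => pt_smul K (B + 1) g s, fun s t hst => ?_,
    fun s v hv => ?_⟩
  · refine lt_of_le_of_lt ?_ hB
    obtain ⟨p, hp⟩ := exists_pair s t
    have := (hm (B + 1)).2 p ⟨⟨s, (hp s).2 (Or.inl rfl)⟩, ?_⟩ s ((hp s).2 (Or.inl rfl)) t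
      ((hp t).2 (Or.inr rfl))
    · rw [← dist_eq_norm] at this
      exact this
    · intro a ha b hb
      replace ha := (hp a).1 ha
      replace hb := (hp b).1 hb
      rcases ha with rfl | rfl <;> rcases hb with rfl | rfl
      · exact Or.inl le_rfl
      · exact Or.inl hst
      · exact Or.inr hst
      · exact Or.inl le_rfl
  · have := bary_betaIter_pos K B s.val v hv (betaIter_pos K B v).1 (betaIter_pos K B v).2
    exact ⟨this.1.ne', this.2.ne'⟩

/-! ### Equivariant choice -/

lemma fix_of_fix [Finite G] (K : GOSC G) (g : G) (x : K.Real) (hx : g • x = x) (w : K.V)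
    (hw : x.val w ≠ 0) : K.smul g w = w := by
  have key : ∀ h : G, w ≤ K.smul h w → K.smul h w = w := by
    intro h hle
    have hk : ∀ k : ℕ, K.smul h w ≤ K.smul (h ^ (k + 1)) w := by
      intro k
      induction k with
      | zero => rw [zero_add, pow_one]
      | succ k ih =>
        refine ih.trans ?_
        rw [pow_succ h (k + 1), K.smul_mul]
        exact K.smul_mono _ _ _ hle
    have := hk (orderOf h - 1)
    rw [Nat.sub_add_cancel (orderOf_pos h), pow_orderOf_eq_one, K.smul_one] at this
    exact le_antisymm this hle
  have hgw : x.val (K.smul g w) ≠ 0 := by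
    have h1 : (g • x).val (K.smul g w) = x.val w := by rw [smul_apply, inv_smul_smul']
    rw [hx] at h1
    rwa [h1]
  rcases K.face_chain _ (Real.supp_mem K x) w ((Real.mem_supp K x w).2 hw) (K.smul g w)
    ((Real.mem_supp K x _).2 hgw) with h | h
  · exact key g h
  · have h2 := key g⁻¹ (by
      have := K.smul_mono g⁻¹ _ _ h
      rwa [inv_smul_smul'] at this)
    conv_lhs => rw [← h2]
    exact smul_inv_smul' K g w

lemma equivariant_choice (M K : GOSC G) (A : Set M.V) (hA : ∀ (g : G), ∀ v ∈ A, M.smul g v ∈ A)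
    (R : M.V → K.V → Prop) (hR : ∀ (g : G) v w, v ∈ A → R v w → R (M.smul g v) (K.smul g w))
    (hex : ∀ v ∈ A, ∃ w, R v w)
    (hst : ∀ v ∈ A, ∀ w, R v w → ∀ g : G, M.smul g v = v → K.smul g w = w) (d : M.V → K.V) :
    ∃ φ : M.V → K.V, ∀ v ∈ A, R v (φ v) ∧ ∀ g : G, φ (M.smul g v) = K.smul g (φ v) := by
  classical
  let S : Setoid M.V :=
    { r := fun v w => ∃ g : G, M.smul g v = w
      iseqv := ⟨fun v => ⟨1, M.smul_one v⟩, by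
        rintro v _ ⟨g, rfl⟩
        exact ⟨g⁻¹, inv_smul_smul' M g v⟩, by
        rintro v _ _ ⟨g, rfl⟩ ⟨h, rfl⟩
        exact ⟨h * g, M.smul_mul h g v⟩⟩ }
  let rep : M.V → M.V := fun v => (Quotient.mk S v).out
  have hrep : ∀ v, ∃ g : G, M.smul g (rep v) = v := fun v => Quotient.exact (Quotient.out_eq (Quotient.mk S v))
  have hrep' : ∀ (g : G) v, rep (M.smul g v) = rep v := by
    intro g v
    have : Quotient.mk S (M.smul g v) = Quotient.mk S v :=
      (Quotient.sound (⟨g, rfl⟩ : S.r v (M.smul g v))).symm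
    show (Quotient.mk S (M.smul g v)).out = (Quotient.mk S v).out
    rw [this]
  choose γ hγ using hrep
  have hrepA : ∀ v ∈ A, rep v ∈ A := by
    intro v hv
    have := hA (γ v)⁻¹ v hv
    have e : M.smul (γ v)⁻¹ v = rep v := by
      have e0 := inv_smul_smul' M (γ v) (rep v)
      rwa [hγ v] at e0
    rwa [e] at this
  let f : M.V → K.V := fun v => if h : v ∈ A then Classical.choose (hex v h) else d v
  have hf : ∀ v ∈ A, R v (f v) := by
    intro v hv
    show R v (dite _ _ _)
    rw [dif_pos hv]
    exact Classical.choose_spec (hex v hv)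
  refine ⟨fun v => K.smul (γ v) (f (rep v)), fun v hv => ⟨?_, fun g => ?_⟩⟩
  · have := hR (γ v) _ _ (hrepA v hv) (hf _ (hrepA v hv))
    rwa [hγ v] at this
  · show K.smul (γ (M.smul g v)) (f (rep (M.smul g v))) = K.smul g (K.smul (γ v) (f (rep v)))
    rw [hrep' g v]
    have e1 : M.smul (γ (M.smul g v)) (rep v) = M.smul g v := by
      have := hγ (M.smul g v)
      rwa [hrep' g v] at this
    have e2 : M.smul ((g * γ v)⁻¹ * γ (M.smul g v)) (rep v) = rep v := by
      rw [M.smul_mul, e1]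
      have : M.smul g v = M.smul (g * γ v) (rep v) := by rw [M.smul_mul, hγ v]
      rw [this]
      exact inv_smul_smul' M _ _
    have e3 := hst _ (hrepA v hv) _ (hf _ (hrepA v hv)) _ e2
    rw [← K.smul_mul g]
    conv_rhs => rw [← e3]
    rw [← K.smul_mul, mul_inv_cancel_left]

/-! ### Lebesgue numbers -/

lemma lebesgue_section (K : GOSC G) (U C : Set (K.Real × K.Real)) (hC : IsClosed C) (hCU : C ⊆ U)
    (s : U → C(unitInterval, K.Real)) (hs : Continuous s) :
    ∃ ε > 0, ∀ (z : K.Real × K.Real) (hz : z ∈ C) (t : unitInterval), ∃ w : K.V,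
      ∀ (z' : K.Real × K.Real) (hz' : z' ∈ C) (t' : unitInterval), dist z' z < ε → dist t' t < ε →
        (s ⟨z', hCU hz'⟩ t').val w ≠ 0 := by
  have : CompactSpace C := isCompact_iff_compactSpace.1 hC.isCompact
  let F : C × unitInterval → K.Real := fun p => s ⟨p.1.val, hCU p.1.prop⟩ p.2
  have hF : Continuous F := by
    have h1 : Continuous fun p : C × unitInterval => s ⟨p.1.val, hCU p.1.prop⟩ :=
      hs.comp (Continuous.subtype_mk (continuous_subtype_val.comp continuous_fst) _)
    exact Continuous.eval h1 continuous_snd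
  obtain ⟨ε, hε, h⟩ := lebesgue_number_lemma_of_metric (s := (Set.univ : Set (C × unitInterval)))
    (c := fun w : K.V => {p | (F p).val w ≠ 0}) isCompact_univ
    (fun w => isOpen_ne_fun ((Real.continuous_apply K w).comp hF) continuous_const) (by
      intro p _
      obtain ⟨w, hw⟩ := Real.exists_pos K (F p)
      exact Set.mem_iUnion.2 ⟨w, hw.ne'⟩)
  refine ⟨ε, hε, fun z hz t => ?_⟩
  obtain ⟨w, hw⟩ := h (⟨z, hz⟩, t) (Set.mem_univ _)
  refine ⟨w, fun z' hz' t' h1 h2 => ?_⟩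
  exact hw (show ((⟨z', hz'⟩, t') : C × unitInterval) ∈ Metric.ball _ _ from max_lt h1 h2)

end GOSC


namespace GOSC

variable {G : Type} [Group G]

/-! ### Contiguity chains from sections -/

lemma contig_of_section [Finite G] (K M : GOSC G) (p₁ p₂ : M.V → K.V)
    (hp₁ : ∀ (g : G) v, p₁ (M.smul g v) = K.smul g (p₁ v))
    (hp₂ : ∀ (g : G) v, p₂ (M.smul g v) = K.smul g (p₂ v))
    (x : (sd M).V → K.Real × K.Real) (hxe : ∀ (g : G) s, x ((sd M).smul g s) = g • x s)
    (ε : ℝ) (hxd : ∀ s t, s.val ⊆ t.val → dist (x s) (x t) < ε)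
    (hx : ∀ s, ∀ v ∈ s.val, (x s).1.val (p₁ v) ≠ 0 ∧ (x s).2.val (p₂ v) ≠ 0)
    (C : Set (K.Real × K.Real)) (H : K.Real × K.Real → unitInterval → K.Real)
    (hH0 : ∀ z ∈ C, H z 0 = z.1) (hH1 : ∀ z ∈ C, H z 1 = z.2)
    (hHe : ∀ (g : G), ∀ z ∈ C, ∀ t, H (g • z) t = g • H z t)
    (hHε : ∀ z ∈ C, ∀ t : unitInterval, ∃ w : K.V, ∀ z' ∈ C, ∀ t' : unitInterval,
      dist z' z < ε → dist t' t < ε → (H z' t').val w ≠ 0)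
    (m : ℕ) (hm : 1 / ((m : ℝ) + 1) < ε)
    (Λ : Set (Finset M.V)) (hΛf : Λ ⊆ M.faces)
    (hΛd : ∀ s ∈ Λ, ∀ t ⊆ s, t.Nonempty → t ∈ Λ)
    (hΛg : ∀ g : G, ∀ s ∈ Λ, s.image (M.smul g) ∈ Λ)
    (hΛC : ∀ s (hs : s ∈ Λ), x ⟨s, hΛf hs⟩ ∈ C) :
    ContigOn M K p₁ p₂ Λ (m + 2) := by
  have hm0 : (0 : ℝ) < (m : ℝ) + 1 := by positivity
  have main : ∀ k : ℕ, k ≤ m + 2 → ∃ φ : M.V → K.V, (k = 0 → φ = p₁) ∧ (k = m + 2 → φ = p₂) ∧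
      (∀ g : G, ∀ s ∈ Λ, ∀ v ∈ s, φ (M.smul g v) = K.smul g (φ v)) ∧
      ∀ s (hs : s ∈ Λ), ∀ v ∈ s, ∀ t : unitInterval, (k : ℝ) - 1 ≤ (t : ℝ) * (m + 1) →
        (t : ℝ) * (m + 1) ≤ k → (H (x ⟨s, hΛf hs⟩) t).val (φ v) ≠ 0 := by
    intro k hk
    by_cases hk0 : k = 0
    · refine ⟨p₁, fun _ => rfl, fun h => by omega, fun g _ _ v _ => hp₁ g v,
        fun s hs v hv t _ h2 => ?_⟩
      have ht : t = 0 := by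
        apply Subtype.ext
        show (t : ℝ) = 0
        have := t.2.1
        rw [hk0, Nat.cast_zero] at h2
        nlinarith
      rw [ht, hH0 _ (hΛC s hs)]
      exact (hx ⟨s, hΛf hs⟩ v hv).1
    by_cases hk1 : k = m + 2
    · refine ⟨p₂, fun h => by omega, fun _ => rfl, fun g _ _ v _ => hp₂ g v,
        fun s hs v hv t h1 _ => ?_⟩
      have ht : t = 1 := by
        apply Subtype.ext
        show (t : ℝ) = 1
        have := t.2.2
        rw [hk1] at h1
        push_cast at h1
        nlinarith
      rw [ht, hH1 _ (hΛC s hs)]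
      exact (hx ⟨s, hΛf hs⟩ v hv).2
    have hk2 : 1 ≤ k ∧ k ≤ m + 1 := by omega
    have hk3 : (1 : ℝ) ≤ k ∧ (k : ℝ) ≤ m + 1 := by exact_mod_cast hk2
    let t₀ : unitInterval := ⟨((k : ℝ) - 1) / (m + 1), div_nonneg (by linarith) hm0.le, by
      rw [div_le_one hm0]; linarith⟩
    have ht₀ : (t₀ : ℝ) * (m + 1) = k - 1 := div_mul_cancel₀ _ hm0.ne'
    have himg : ∀ (g : G) (s : Finset M.V) v, M.smul g v ∈ s → v ∈ s.image (M.smul g⁻¹) :=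
      fun g s v hv => Finset.mem_image.2 ⟨_, hv, inv_smul_smul' M g v⟩
    obtain ⟨φ, hφ⟩ := equivariant_choice M K {v | {v} ∈ Λ}
      (fun g v hv => by
        have := hΛg g _ hv
        rwa [Finset.image_singleton] at this)
      (fun v w => ∀ s (hs : s ∈ Λ), v ∈ s → ∀ t : unitInterval, (k : ℝ) - 1 ≤ (t : ℝ) * (m + 1) →
        (t : ℝ) * (m + 1) ≤ k → (H (x ⟨s, hΛf hs⟩) t).val w ≠ 0)
      (by
        intro g v w _ hR s hs hv t h1 h2
        have h3 := hR _ (hΛg g⁻¹ s hs) (himg g s v hv) t h1 h2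
        have e : x ⟨s.image (M.smul g⁻¹), hΛf (hΛg g⁻¹ s hs)⟩ = g⁻¹ • x ⟨s, hΛf hs⟩ :=
          hxe g⁻¹ ⟨s, hΛf hs⟩
        rw [e, hHe _ _ (hΛC s hs), smul_apply, inv_inv] at h3
        exact h3)
      (by
        intro v hv
        obtain ⟨w, hw⟩ := hHε _ (hΛC _ hv) t₀
        refine ⟨w, fun s hs hvs t h1 h2 => hw _ (hΛC s hs) t ?_ ?_⟩
        · rw [dist_comm]
          exact hxd _ _ (Finset.singleton_subset_iff.2 hvs)
        · refine lt_of_le_of_lt ?_ hm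
          show |(t : ℝ) - t₀| ≤ _
          rw [abs_of_nonneg, le_div_iff₀ hm0]
          · rw [sub_mul, ht₀]; linarith
          · rw [sub_nonneg]
            exact le_of_mul_le_mul_right (by rw [ht₀]; exact h1) hm0)
      (by
        intro v hv w hR g hg
        have h3 := hR _ hv (Finset.mem_singleton_self v) t₀ ht₀.ge (by rw [ht₀]; linarith)
        refine fix_of_fix K g _ ?_ w h3
        have h4 : (sd M).smul g ⟨{v}, hΛf hv⟩ = ⟨{v}, hΛf hv⟩ := by
          apply Subtype.ext
          show Finset.image (M.smul g) {v} = {v}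
          rw [Finset.image_singleton, hg]
        have h5 := hxe g ⟨{v}, hΛf hv⟩
        rw [h4] at h5
        rw [← hHe _ _ (hΛC _ hv)]
        exact congrArg (fun z => H z t₀) h5.symm)
      p₁
    have hsing : ∀ s ∈ Λ, ∀ v ∈ s, ({v} : Finset M.V) ∈ Λ := fun s hs v hv =>
      hΛd s hs _ (Finset.singleton_subset_iff.2 hv) (Finset.singleton_nonempty v)
    exact ⟨φ, fun h => absurd h hk0, fun h => absurd h hk1,
      fun g s hs v hv => (hφ v (hsing s hs v hv)).2 g,
      fun s hs v hv => (hφ v (hsing s hs v hv)).1 s hs hv⟩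
  choose φ h0 h1 he hφ using main
  have hface : ∀ s (hs : s ∈ Λ) (t : unitInterval) (a : Finset K.V), a.Nonempty →
      (∀ w ∈ a, (H (x ⟨s, hΛf hs⟩) t).val w ≠ 0) → a ∈ K.faces := by
    intro s hs t a ha h
    exact K.down_closed _ (Real.supp_mem K (H (x ⟨s, hΛf hs⟩) t)) _
      (fun w hw => (Real.mem_supp K _ w).2 (h w hw)) ha
  have hunion : ∀ j : Fin (m + 2), ∀ s ∈ Λ, (s.image (φ j (by omega)) ∪
      s.image (φ (j + 1) (by omega))) ∈ K.faces := by
    intro j s hs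
    have hj : ((j : ℕ) : ℝ) ≤ m + 1 := by
      have := j.2
      exact_mod_cast (by omega : (j : ℕ) ≤ m + 1)
    let t : unitInterval := ⟨((j : ℕ) : ℝ) / (m + 1), by positivity, by
      rw [div_le_one hm0]; exact hj⟩
    have ht : (t : ℝ) * (m + 1) = (j : ℕ) := div_mul_cancel₀ _ hm0.ne'
    refine hface s hs t _ ?_ ?_
    · exact ((M.nonempty_of_mem s (hΛf hs)).image _).mono Finset.subset_union_left
    · intro w hw
      rcases Finset.mem_union.1 hw with hw | hw
      · obtain ⟨v, hv, rfl⟩ := Finset.mem_image.1 hw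
        exact hφ _ _ s hs v hv t (by rw [ht]; linarith) ht.le
      · obtain ⟨v, hv, rfl⟩ := Finset.mem_image.1 hw
        exact hφ _ _ s hs v hv t (by rw [ht]; push_cast; linarith) (by rw [ht]; push_cast; linarith)
  refine ⟨fun j => φ j (by omega), ?_, ?_, ?_, ?_, ?_⟩
  · intro s _ v _
    exact congrFun (h0 _ _ rfl) v
  · intro s _ v _
    exact congrFun (h1 _ _ rfl) v
  · intro j s hs
    by_cases hj : (j : ℕ) < m + 2
    · exact K.down_closed _ (hunion ⟨j, hj⟩ s hs) _ Finset.subset_union_left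
        ((M.nonempty_of_mem s (hΛf hs)).image _)
    · have hj' : (j : ℕ) = m + 1 + 1 := by omega
      have := K.down_closed _ (hunion ⟨m + 1, by omega⟩ s hs) _ Finset.subset_union_right
        ((M.nonempty_of_mem s (hΛf hs)).image _)
      have hj2 : j = ⟨m + 1 + 1, by omega⟩ := Fin.ext hj'
      rw [hj2]
      exact this
  · intro j g s hs v hv
    exact he _ _ g s hs v hv
  · intro j s hs
    exact hunion j s hs

lemma SCG_le_eqTC [Finite G] (K : GOSC G) : K.SCG ≤ eqTC G K.Real := by
  refine le_sInf ?_
  rintro k ⟨n, rfl, U, hUo, hUg, hUc, hnav⟩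
  choose σ hσc hσe hσg using hnav
  obtain ⟨δ, hδ, hleb⟩ := lebesgue_number_lemma_of_metric
    (s := (Set.univ : Set (K.Real × K.Real))) (c := U) isCompact_univ hUo hUc.ge
  let C : Fin n → Set (K.Real × K.Real) := fun i => {z | Metric.ball z (δ / 2) ⊆ U i}
  have hCU : ∀ i, C i ⊆ U i := fun i z hz => hz (Metric.mem_ball_self (by linarith))
  have hCc : ∀ i, IsClosed (C i) := by
    intro i
    have : C i = ⋂ y ∈ (U i)ᶜ, {z | δ / 2 ≤ dist y z} := by
      ext z
      simp only [Set.mem_iInter, Set.mem_setOf_eq]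
      constructor
      · intro hz y hy
        by_contra! h
        exact hy (hz h)
      · intro h y hy
        by_contra hyU
        exact absurd (h y hyU) (not_le.2 hy)
    rw [this]
    exact isClosed_biInter fun y _ =>
      isClosed_le continuous_const (continuous_const.dist continuous_id)
  have hCg : ∀ i (g : G), ∀ z ∈ C i, g • z ∈ C i := by
    intro i g z hz y hy
    have h1 : g⁻¹ • y ∈ U i := by
      refine hz (Metric.mem_ball.2 (lt_of_le_of_lt ?_ (Metric.mem_ball.1 hy)))
      have := dist_smul_le' K g⁻¹ y (g • z)
      rwa [inv_smul_smul] at this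
    have h2 := hUg i g _ h1
    rwa [smul_inv_smul] at h2
  choose ε hε hεp using fun i => lebesgue_section K (U i) (C i) (hCc i) (hCU i) (σ i) (hσc i)
  obtain ⟨e, he0, hei⟩ : ∃ e > 0, ∀ i, e ≤ ε i := by
    have : ∀ᶠ e in nhdsWithin (0 : ℝ) (Set.Ioi 0), ∀ i, e ≤ ε i := by
      rw [Filter.eventually_all]
      intro i
      exact Filter.eventually_of_mem (mem_nhdsWithin_of_mem_nhds (Iio_mem_nhds (hε i)))
        fun e he => le_of_lt he
    obtain ⟨e, he, he0⟩ := (this.and self_mem_nhdsWithin).exists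
    exact ⟨e, he0, he⟩
  obtain ⟨m, hm⟩ := exists_nat_one_div_lt he0
  obtain ⟨B, x, hxe, hxd, hxp⟩ := exists_points K (min e (δ / 2)) (lt_min he0 (by linarith))
  let M := sdIter B (K.prod K)
  let Λ : Fin n → Set (Finset M.V) := fun i =>
    {s | s ∈ M.faces ∧ ∀ t (ht : t ∈ M.faces), t ⊆ s → x ⟨t, ht⟩ ∈ C i}
  refine (iInf_le _ B).trans ((iInf_le _ (m + 2)).trans (sInf_le ?_))
  have hd : ∀ i, ∀ s ∈ Λ i, ∀ t ⊆ s, t.Nonempty → t ∈ Λ i := by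
    intro i s hs t hts htn
    exact ⟨M.down_closed s hs.1 t hts htn, fun r hr hrt => hs.2 r hr (hrt.trans hts)⟩
  have hg : ∀ i, ∀ g : G, ∀ s ∈ Λ i, s.image (M.smul g) ∈ Λ i := by
    intro i g s hs
    refine ⟨M.smul_faces g s hs.1, fun t ht hts => ?_⟩
    have h1 := hs.2 (t.image (M.smul g⁻¹)) (M.smul_faces g⁻¹ t ht) (by
      intro v hv
      obtain ⟨u, hu, rfl⟩ := Finset.mem_image.1 hv
      obtain ⟨w, hw, rfl⟩ := Finset.mem_image.1 (hts hu)
      rwa [inv_smul_smul' M g w])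
    have h2 : x ⟨t.image (M.smul g⁻¹), M.smul_faces g⁻¹ t ht⟩ = g⁻¹ • x ⟨t, ht⟩ := hxe g⁻¹ ⟨t, ht⟩
    rw [h2] at h1
    have h3 := hCg i g _ h1
    rwa [smul_inv_smul] at h3
  refine ⟨n, rfl, Λ, fun i s hs => hs.1, hd, hg, ?_, fun i => ?_⟩
  · intro s hs
    obtain ⟨i, hi⟩ := hleb (x ⟨s, hs⟩) (Set.mem_univ _)
    refine Set.mem_iUnion.2 ⟨i, hs, fun t ht hts y hy => hi ?_⟩
    have h1 : dist (x ⟨t, ht⟩) (x ⟨s, hs⟩) < δ / 2 := (hxd _ _ hts).trans_le (min_le_right _ _)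
    have h2 : dist y (x ⟨t, ht⟩) < δ / 2 := hy
    have := dist_triangle y (x ⟨t, ht⟩) (x ⟨s, hs⟩)
    show dist _ _ < δ
    linarith
  · classical
    let H : K.Real × K.Real → unitInterval → K.Real := fun z t =>
      if h : z ∈ U i then σ i ⟨z, h⟩ t else z.1
    have hH : ∀ z (h : z ∈ U i) t, H z t = σ i ⟨z, h⟩ t := fun z h t => dif_pos h
    refine contig_of_section K M _ _ ?_ ?_ x hxe e
      (fun s t h => (hxd s t h).trans_le (min_le_left _ _)) hxp (C i) H ?_ ?_ ?_ ?_ m hm (Λ i)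
      (fun s hs => hs.1) (hd i) (hg i) (fun s hs => hs.2 s hs.1 (Finset.Subset.refl s))
    · intro g v
      exact congrArg Prod.fst (tauIter_smul (K.prod K) B g v)
    · intro g v
      exact congrArg Prod.snd (tauIter_smul (K.prod K) B g v)
    · intro z hz
      rw [hH z (hCU i hz)]
      exact (hσe i ⟨z, _⟩).1
    · intro z hz
      rw [hH z (hCU i hz)]
      exact (hσe i ⟨z, _⟩).2
    · intro g z hz t
      rw [hH z (hCU i hz), hH (g • z) (hUg i g z (hCU i hz))]
      exact hσg i g ⟨z, _⟩ _ t
    · intro z hz t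
      obtain ⟨w, hw⟩ := hεp i z hz t
      refine ⟨w, fun z' hz' t' h1 h2 => ?_⟩
      rw [hH z' (hCU i hz')]
      exact hw z' hz' t' (h1.trans_le (hei i)) (h2.trans_le (hei i))

end GOSC

/-- Let `G` be a finite group and `K` an ordered `G`-simplicial complex.
Then the equivariant topological complexity of the geometric realization `|K|` equals the
equivariant simplicial complexity of `K`: `TC_G(|K|) = SC_G(K)`. -/
theorem eqTC_real_eq_SCG (G : Type) [Group G] [Finite G] (K : GOSC G) :
    eqTC G K.Real = K.SCG := by
  exact le_antisymm (GOSC.eqTC_le_SCG K) (GOSC.SCG_le_eqTC K)
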